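/- For every finite coloring of the set of perfect squares {n² : n ∈ ℕ}: (1) there exist distinct squares x, y with the same color such that x + y is a perfect square; and (2) there exist distinct squares x, y with the same color such that x − y is a perfect square (in particular x − y > 0). -/

import Mathlib

/-! Both parts are cases (`s = -1` and `s = 1`) of solving `x² = s y² + z²` with `x`, `y` of the
same color. A coloring of `ℕ` induces one of `ℚˣ` by looking at `N! q` along an ultrafilter, so it
is enough to solve the equation in the units of an infinite field `K` with `2 ≠ 0`. There `x / y`
may be taken of the form `r(t) = (t² + s) / (2 t)`, and one needs `g` and `r(t) g` to have the same
color for infinitely many `t`.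

Choose a color class of positive mass for an invariant mean on `Kˣ`, and let `ξ` be its indicator,
viewed in the Hilbert space `L²(K × Kˣ)` of an affinely invariant mean times the multiplicative
one. Functions `w : K → Kˣ` act by multiplication `P w` of the fibres, and the affine group acts on
the base. Since affine maps are 2-transitive, the deviations of `P (y - h) v` from their average
`T v` over `h` are pairwise orthogonal for different `h`. Bessel's inequality then shows that, on
average over `p`, the quadratic factor `(y - p)(y + s / p)` acts on `ξ` like `T ∘ T`, up to a
constant.

The Möbius map `μ_p(y) = (p y + s) / (y - p)` turns `1 / r(μ_p(y))` into such a quadratic factor,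
divided by `y² + s`. Hence one step of the random walk `t ↦ μ_t(y)` changes the average of
`P (1 / r(t)) ξ` by a contraction `Z`. For the average `k` against a stationary mean this gives
`Z k = k`, from which `k` is fixed by all constants `P u`. If `ξ` and `P (r(t)) ξ` were orthogonal
for almost all `t`, then `k` would be orthogonal to every `P u ξ` and therefore vanish; but
`⟪k, 1⟫` is the mass of the color class. -/

open Filter Function Topology
open scoped InnerProductSpace

section Bounded

variable {X Y E F : Type*}

/-- A function is bounded if its norm has a uniform upper bound. -/
@[fun_prop]
def IsBdd [Norm E] (f : X → E) : Prop := ∃ C, ∀ x, ‖f x‖ ≤ C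

namespace IsBdd

@[fun_prop]
theorem const [Norm E] (v : E) : IsBdd fun _ : X => v := ⟨‖v‖, fun _ => le_rfl⟩

theorem comp [Norm E] {f : Y → E} (hf : IsBdd f) (φ : X → Y) : IsBdd fun x => f (φ x) :=
  hf.imp fun _ hC x => hC (φ x)

theorem mono [Norm E] [Norm F] {f : X → E} {g : X → F} (hg : IsBdd g) (h : ∀ x, ‖f x‖ ≤ ‖g x‖) :
    IsBdd f :=
  hg.imp fun _ hC x => (h x).trans (hC x)

section Normed

variable [SeminormedAddCommGroup E] {f g : X → E}

@[fun_prop]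
theorem add (hf : IsBdd f) (hg : IsBdd g) : IsBdd fun x => f x + g x := by
  obtain ⟨C, hC⟩ := hf
  obtain ⟨D, hD⟩ := hg
  exact ⟨C + D, fun x => norm_add_le_of_le (hC x) (hD x)⟩

@[fun_prop]
theorem sub (hf : IsBdd f) (hg : IsBdd g) : IsBdd fun x => f x - g x := by
  obtain ⟨C, hC⟩ := hf
  obtain ⟨D, hD⟩ := hg
  exact ⟨C + D, fun x => norm_sub_le_of_le (hC x) (hD x)⟩

theorem smul [NormedSpace ℝ E] (hf : IsBdd f) (a : ℝ) : IsBdd fun x => a • f x := by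
  obtain ⟨C, hC⟩ := hf
  refine ⟨‖a‖ * C, fun x => ?_⟩
  rw [norm_smul]
  exact mul_le_mul_of_nonneg_left (hC x) (norm_nonneg a)

end Normed

@[fun_prop]
theorem mul {f g : X → ℝ} (hf : IsBdd f) (hg : IsBdd g) : IsBdd fun x => f x * g x := by
  obtain ⟨C, hC⟩ := hf
  obtain ⟨D, hD⟩ := hg
  refine ⟨C * D, fun x => ?_⟩
  rw [norm_mul]
  exact mul_le_mul (hC x) (hD x) (norm_nonneg _) ((norm_nonneg _).trans (hC x))

@[fun_prop]
theorem pow {f : X → ℝ} (hf : IsBdd f) (n : ℕ) : IsBdd fun x => f x ^ n := by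
  obtain ⟨C, hC⟩ := hf
  exact ⟨C ^ n, fun x => by rw [norm_pow]; exact pow_le_pow_left₀ (norm_nonneg _) (hC x) n⟩

@[fun_prop]
theorem inner [NormedAddCommGroup E] [InnerProductSpace ℝ E] {f g : X → E} (hf : IsBdd f)
    (hg : IsBdd g) : IsBdd fun x => ⟪f x, g x⟫_ℝ := by
  obtain ⟨C, hC⟩ := hf
  obtain ⟨D, hD⟩ := hg
  exact ⟨C * D, fun x => (norm_inner_le_norm _ _).trans
    (mul_le_mul (hC x) (hD x) (norm_nonneg _) ((norm_nonneg _).trans (hC x)))⟩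

theorem exists_tendsto {f : X → ℝ} (hf : IsBdd f) (𝒰 : Ultrafilter X) :
    ∃ a, Tendsto f 𝒰 (𝓝 a) := by
  obtain ⟨C, hC⟩ := hf
  obtain ⟨a, -, ha⟩ := (isCompact_Icc (a := -C) (b := C)).ultrafilter_le_nhds' (𝒰.map f)
    (Filter.mem_map.2 (univ_mem' fun x => abs_le.1 (hC x)))
  exact ⟨a, ha⟩

end IsBdd

end Bounded

/-- A mean (finitely additive probability) on `X`, as a positive normalized linear functional.
It is total on `X → ℝ` so that means can be iterated freely, but positivity is only required on
bounded functions: the values on unbounded functions carry no information. -/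
structure Mean (X : Type*) extends (X → ℝ) →ₗ[ℝ] ℝ where
  nonneg' : ∀ f : X → ℝ, IsBdd f → (∀ x, 0 ≤ f x) → 0 ≤ toFun f
  one' : toFun (fun _ => 1) = 1

namespace Mean

variable {X Y : Type*}

instance : FunLike (Mean X) (X → ℝ) ℝ where
  coe μ := μ.toFun
  coe_injective μ ν h := by
    cases μ; cases ν; congr; exact LinearMap.ext (congrFun h)

instance : LinearMapClass (Mean X) ℝ (X → ℝ) ℝ where
  map_add μ := μ.map_add'
  map_smulₛₗ μ := μ.map_smul'

section Basic

variable (μ : Mean X)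

theorem apply_add (f g : X → ℝ) : μ (fun x => f x + g x) = μ f + μ g := map_add μ f g

theorem apply_sub (f g : X → ℝ) : μ (fun x => f x - g x) = μ f - μ g := map_sub μ f g

theorem apply_const_mul (a : ℝ) (f : X → ℝ) : μ (fun x => a * f x) = a * μ f := map_smul μ a f

theorem apply_sum {ι : Type*} (s : Finset ι) (f : ι → X → ℝ) :
    μ (fun x => ∑ i ∈ s, f i x) = ∑ i ∈ s, μ (f i) := by
  rw [← map_sum]
  congr 1
  ext x
  exact (Finset.sum_apply x s f).symm

@[simp]
theorem apply_const (a : ℝ) : μ (fun _ => a) = a := by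
  have one : μ (fun _ => 1) = 1 := μ.one'
  simpa [one] using μ.apply_const_mul a fun _ => 1

variable {μ}

theorem nonneg {f : X → ℝ} (hf : IsBdd f) (h : ∀ x, 0 ≤ f x) : 0 ≤ μ f := μ.nonneg' f hf h

theorem mono {f g : X → ℝ} (hf : IsBdd f) (hg : IsBdd g) (h : ∀ x, f x ≤ g x) : μ f ≤ μ g := by
  rw [← sub_nonneg, ← apply_sub]
  exact nonneg (hg.sub hf) fun x => sub_nonneg.2 (h x)

theorem abs_apply_le {f : X → ℝ} {C : ℝ} (h : ∀ x, |f x| ≤ C) : |μ f| ≤ C := by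
  have hf : IsBdd f := ⟨C, h⟩
  rw [abs_le]
  constructor
  · simpa using mono (μ := μ) (IsBdd.const (-C)) hf fun x => (abs_le.1 (h x)).1
  · simpa using mono (μ := μ) hf (IsBdd.const C) fun x => (abs_le.1 (h x)).2

theorem sq_apply_le {f : X → ℝ} (hf : IsBdd f) : μ f ^ 2 ≤ μ fun x => f x ^ 2 := by
  have h : 0 ≤ μ fun x => (f x - μ f) ^ 2 := nonneg (by fun_prop) fun x => sq_nonneg _
  have expand : (fun x => (f x - μ f) ^ 2) = fun x => f x ^ 2 - 2 * μ f * f x + μ f ^ 2 := by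
    ext x; ring
  rw [expand, apply_add, apply_sub, apply_const_mul, apply_const] at h
  linarith

end Basic

/-- The uniform mean on the first `n + 1` natural numbers. -/
noncomputable def average (n : ℕ) : Mean ℕ where
  toFun f := (∑ i ∈ Finset.range (n + 1), f i) / (n + 1)
  map_add' f g := by simp only [Pi.add_apply, Finset.sum_add_distrib, add_div]
  map_smul' a f := by simp only [Pi.smul_apply, smul_eq_mul, ← Finset.mul_sum, mul_div_assoc,
    RingHom.id_apply]
  nonneg' f _ h := div_nonneg (Finset.sum_nonneg fun i _ => h i) (by positivity)
  one' := by simp [div_self (Nat.cast_add_one_ne_zero (R := ℝ) n)]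

theorem average_apply (n : ℕ) (f : ℕ → ℝ) :
    average n f = (∑ i ∈ Finset.range (n + 1), f i) / (n + 1) := rfl

/-- The point mass at `x`. -/
def dirac (x : X) : Mean X where
  toLinearMap := LinearMap.proj x
  nonneg' _ _ h := h x
  one' := rfl

/-- The image of a mean under a map. -/
def map (φ : X → Y) (μ : Mean X) : Mean Y where
  toLinearMap := μ.toLinearMap ∘ₗ LinearMap.funLeft ℝ ℝ φ
  nonneg' _ hf h := μ.nonneg (hf.comp φ) fun x => h (φ x)
  one' := μ.one'

@[simp]
theorem map_apply (φ : X → Y) (μ : Mean X) (f : Y → ℝ) : μ.map φ f = μ fun x => f (φ x) := rfl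

end Mean

theorem IsBdd.mean_apply {X Y : Type*} {f : X → Y → ℝ}
    (hf : IsBdd fun p : X × Y => f p.1 p.2) (ν : X → Mean Y) : IsBdd fun x => ν x (f x) :=
  hf.imp fun _ hC x => Mean.abs_apply_le fun y => hC (x, y)

namespace Mean

variable {X Y : Type*}

/-- Integration of a family of means. -/
def bind (μ : Mean X) (ν : X → Mean Y) : Mean Y where
  toLinearMap := μ.toLinearMap ∘ₗ LinearMap.pi fun x => (ν x).toLinearMap
  nonneg' _ hf h := μ.nonneg (IsBdd.mean_apply (hf.comp Prod.snd) ν) fun x => (ν x).nonneg hf h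
  one' := (congrArg μ (funext fun x => (ν x).one')).trans μ.one'

@[simp]
theorem bind_apply (μ : Mean X) (ν : X → Mean Y) (f : Y → ℝ) : μ.bind ν f = μ fun x => ν x f := rfl

/-- The iterated mean `f ↦ μ_x (ν_y f (x, y))`; the order matters, as Fubini fails for means. -/
def prod (μ : Mean X) (ν : Mean Y) : Mean (X × Y) := μ.bind fun x => ν.map (Prod.mk x)

@[simp]
theorem prod_apply (μ : Mean X) (ν : Mean Y) (f : X × Y → ℝ) :
    μ.prod ν f = μ fun x => ν fun y => f (x, y) := rfl

section Limit

theorem exists_eq_of_tendsto (l : Filter X) [l.NeBot] :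
    ∃ μ : Mean X, ∀ f a, Tendsto f l (𝓝 a) → μ f = a := by
  let 𝒰 := Ultrafilter.of l
  let convergent : Submodule ℝ (X → ℝ) :=
    { carrier := {f | ∃ a, Tendsto f 𝒰 (𝓝 a)}
      add_mem' := fun ⟨a, ha⟩ ⟨b, hb⟩ => ⟨a + b, ha.add hb⟩
      zero_mem' := ⟨0, tendsto_const_nhds⟩
      smul_mem' := fun c _ ⟨a, ha⟩ => ⟨c • a, ha.const_smul c⟩ }
  have lim_spec (f : convergent) : Tendsto f.1 𝒰 (𝓝 (limUnder 𝒰 f.1)) := tendsto_nhds_limUnder f.2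
  let lim : convergent →ₗ[ℝ] ℝ :=
    { toFun := fun f => limUnder 𝒰 f.1
      map_add' := fun f g => ((lim_spec f).add (lim_spec g)).limUnder_eq
      map_smul' := fun c f => ((lim_spec f).const_smul c).limUnder_eq }
  obtain ⟨L, hL⟩ := lim.exists_extend
  have L_eq {f : X → ℝ} {a : ℝ} (h : Tendsto f 𝒰 (𝓝 a)) : L f = a :=
    (LinearMap.congr_fun hL ⟨f, a, h⟩).trans h.limUnder_eq
  refine ⟨⟨L, fun f hf h => ?_, L_eq tendsto_const_nhds⟩,
    fun f a h => L_eq (h.mono_left (Ultrafilter.of_le l))⟩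
  obtain ⟨a, ha⟩ := hf.exists_tendsto 𝒰
  exact (ge_of_tendsto' ha h).trans_eq (L_eq ha).symm

theorem exists_banach_limit :
    ∃ L : Mean ℕ, ∀ f : ℕ → ℝ, IsBdd f → L (fun n => f (n + 1)) = L f := by
  obtain ⟨μ, hμ⟩ := exists_eq_of_tendsto (atTop : Filter ℕ)
  refine ⟨μ.bind average, fun f ⟨C, hC⟩ => ?_⟩
  rw [← sub_eq_zero, bind_apply, bind_apply, ← apply_sub]
  refine hμ _ _ (squeeze_zero_norm (fun n => ?_)
    (tendsto_const_div_atTop_nhds_zero_nat (C + C) |>.comp (tendsto_add_atTop_nat 1)))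
  have telescope : average n (fun i => f (i + 1)) - average n f = (f (n + 1) - f 0) / (n + 1) := by
    rw [average_apply, average_apply, ← sub_div, ← Finset.sum_sub_distrib, Finset.sum_range_sub]
  simp only [Function.comp_apply, Nat.cast_add, Nat.cast_one]
  rw [telescope, norm_div, Real.norm_of_nonneg (by positivity : (0 : ℝ) ≤ n + 1)]
  gcongr
  exact norm_sub_le_of_le (hC _) (hC _)

end Limit

section Invariant

variable {M : Type*} [CommMonoid M] [MulAction M X]

theorem exists_invariant_finset [Nonempty X] (s : Finset M) :
    ∃ μ : Mean X, ∀ m ∈ s, ∀ f : X → ℝ, IsBdd f → μ (fun x => f (m • x)) = μ f := by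
  classical
  induction s using Finset.induction_on with
  | empty => exact ⟨dirac (Classical.arbitrary X), by simp⟩
  | insert m s _ ih =>
    obtain ⟨μ, hμ⟩ := ih
    obtain ⟨L, hL⟩ := exists_banach_limit
    refine ⟨L.bind fun k => μ.map (m ^ k • ·), fun m' hm' f hf => ?_⟩
    simp only [bind_apply, map_apply]
    rcases Finset.mem_insert.1 hm' with rfl | hm'
    · simp only [smul_smul, ← pow_succ']
      exact hL _ (IsBdd.mean_apply (f := fun k x => f (m' ^ k • x)) (hf.comp _) fun _ => μ)
    · congr! 2 with k
      simp only [smul_comm m' (m ^ k)]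
      exact hμ m' hm' (fun x => f (m ^ k • x)) (hf.comp _)

variable (M X) in
/-- The Markov–Kakutani theorem: commutative monoids are amenable. -/
theorem exists_invariant [Nonempty X] :
    ∃ μ : Mean X, ∀ (m : M) (f : X → ℝ), IsBdd f → μ (fun x => f (m • x)) = μ f := by
  choose μ hμ using exists_invariant_finset (M := M) (X := X)
  obtain ⟨L, hL⟩ := exists_eq_of_tendsto (atTop : Filter (Finset M))
  refine ⟨L.bind μ, fun m f hf => ?_⟩
  rw [← sub_eq_zero, bind_apply, bind_apply, ← apply_sub]
  refine hL _ _ (tendsto_const_nhds.congr' ?_)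
  filter_upwards [eventually_ge_atTop {m}] with s hs
  exact (sub_eq_zero.2 (hμ s m (Finset.singleton_subset_iff.1 hs) f hf)).symm

end Invariant

section Diffuse

/-- A mean is diffuse if points have mass zero. -/
def IsDiffuse (μ : Mean X) : Prop := ∀ x, μ (Set.indicator {x} fun _ => 1) = 0

namespace IsDiffuse

variable {μ : Mean X} (hμ : IsDiffuse μ)
include hμ

theorem apply_congr {f g : X → ℝ} (h : f =ᶠ[cofinite] g) : μ f = μ g := by
  have hfin : {x | f x ≠ g x}.Finite := h
  have decomp : (fun x => f x - g x) =
      fun x => ∑ y ∈ hfin.toFinset, (f y - g y) * Set.indicator {y} (fun _ => 1) x := by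
    classical
    ext x
    simp +contextual [Set.indicator_apply]
  rw [← sub_eq_zero, ← apply_sub, decomp, apply_sum]
  exact Finset.sum_eq_zero fun y _ => by rw [apply_const_mul, hμ y, mul_zero]

theorem abs_apply_le_of_eventually {f : X → ℝ} {C : ℝ} (hC : 0 ≤ C)
    (hf : ∀ᶠ x in cofinite, |f x| ≤ C) : |μ f| ≤ C := by
  classical
  rw [hμ.apply_congr (g := fun x => if |f x| ≤ C then f x else 0)]
  · exact abs_apply_le fun x => by split_ifs with h <;> simp_all
  · filter_upwards [hf] with x hx using (if_pos hx).symm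

theorem apply_eq_zero_of_tendsto {f : X → ℝ} (hf : Tendsto f cofinite (𝓝 0)) : μ f = 0 := by
  refine abs_nonpos_iff.1 (le_of_forall_pos_le_add fun ε hε => ?_)
  rw [zero_add]
  refine hμ.abs_apply_le_of_eventually hε.le ?_
  filter_upwards [Metric.tendsto_nhds.1 hf ε hε] with x hx
  simpa using hx.le

end IsDiffuse

end Diffuse

section Affine

variable {K : Type*} [Field K]

/-- Invariance of a mean on a field under the affine group. -/
def IsAffineInvariant (μ : Mean K) : Prop :=
  ∀ (a : Kˣ) (b : K) (f : K → ℝ), IsBdd f → μ (fun y => f (a * y + b)) = μ f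

theorem IsAffineInvariant.isDiffuse [Infinite K] {μ : Mean K} (hμ : μ.IsAffineInvariant) :
    μ.IsDiffuse := by
  have bdd (x : K) : IsBdd (Set.indicator {x} fun _ => (1 : ℝ)) :=
    ⟨1, fun y => by by_cases h : y = x <;> simp [h]⟩
  have same_mass (x y : K) :
      μ (Set.indicator {x} fun _ => 1) = μ (Set.indicator {y} fun _ => 1) := by
    rw [← hμ 1 (x - y) _ (bdd x)]
    congr 1
    classical
    ext z
    simp [Set.indicator_apply, ← eq_sub_iff_add_eq]
  intro x
  have card_mul_mass_le (n : ℕ) : n * μ (Set.indicator {x} fun _ => 1) ≤ 1 := by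
    obtain ⟨s, -, rfl⟩ := Set.infinite_univ.exists_subset_card_eq (α := K) n
    rw [← nsmul_eq_mul, ← Finset.sum_const, ← Finset.sum_congr rfl fun y _ => same_mass y x,
      ← apply_sum]
    refine (le_abs_self _).trans (abs_apply_le fun z => ?_)
    classical
    by_cases hz : z ∈ s <;> simp [Set.indicator_apply, hz]
  refine le_antisymm (not_lt.1 fun hpos => ?_)
    (nonneg (bdd x) fun y => Set.indicator_nonneg (by simp) y)
  obtain ⟨n, hn⟩ := exists_nat_gt (μ (Set.indicator {x} fun _ => 1))⁻¹
  exact (card_mul_mass_le n).not_gt (by rwa [inv_lt_iff_one_lt_mul₀ hpos] at hn)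

variable (K) in
theorem exists_isAffineInvariant : ∃ μ : Mean K, μ.IsAffineInvariant := by
  obtain ⟨dil, hdil⟩ := exists_invariant Kˣ Kˣ
  obtain ⟨trans, htrans⟩ := exists_invariant K (Multiplicative K)
  refine ⟨dil.bind fun u => trans.map (u * ·), fun a b f hf => ?_⟩
  have translate (u : Kˣ) :
      trans (fun y => f (a * (u * y) + b)) = trans fun y => f (a * u * y) := by
    rw [← htrans (Multiplicative.ofAdd ((a * u : K)⁻¹ * b)) (fun y => f (a * u * y)) (hf.comp _)]
    congr! 3 with y
    change _ = (a * u : K) * ((a * u : K)⁻¹ * b + y)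
    field_simp
    ring
  simp only [bind_apply, map_apply, translate]
  exact hdil a _ (IsBdd.mean_apply (f := fun (u : Kˣ) y => f (u * y)) (hf.comp _) fun _ => trans)

end Affine

end Mean

section Hilbert

variable {X H : Type*} [NormedAddCommGroup H] [InnerProductSpace ℝ H]

namespace Mean

variable [CompleteSpace H]

theorem exists_inner_eq (μ : Mean X) {d : X → H} (hd : IsBdd d) :
    ∃ v : H, ∀ x, ⟪v, x⟫_ℝ = μ fun y => ⟪d y, x⟫_ℝ := by
  obtain ⟨C, hC⟩ := hd
  let functional : H →ₗ[ℝ] ℝ :=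
    { toFun := fun x => μ fun y => ⟪d y, x⟫_ℝ
      map_add' := fun x x' => by simp only [inner_add_right, apply_add]
      map_smul' := fun a x => by
        simp only [real_inner_smul_right, apply_const_mul, RingHom.id_apply, smul_eq_mul] }
  refine ⟨(InnerProductSpace.toDual ℝ H).symm (functional.mkContinuous C fun x => ?_), fun x => ?_⟩
  · exact abs_apply_le fun y =>
      (abs_real_inner_le_norm (d y) x).trans (mul_le_mul_of_nonneg_right (hC y) (norm_nonneg x))
  · rw [InnerProductSpace.toDual_symm_apply]
    rfl

/-- The weak integral of a bounded family of vectors (an arbitrary vector if the family is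
unbounded). -/
noncomputable def integral (μ : Mean X) (d : X → H) : H :=
  Classical.epsilon fun v => ∀ x, ⟪v, x⟫_ℝ = μ fun y => ⟪d y, x⟫_ℝ

variable {μ : Mean X} {d : X → H}

theorem integral_inner (hd : IsBdd d) (x : H) : ⟪μ.integral d, x⟫_ℝ = μ fun y => ⟪d y, x⟫_ℝ :=
  Classical.epsilon_spec (μ.exists_inner_eq hd) x

theorem inner_integral (hd : IsBdd d) (x : H) : ⟪x, μ.integral d⟫_ℝ = μ fun y => ⟪x, d y⟫_ℝ := by
  simp only [real_inner_comm _ x, integral_inner hd x]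

theorem integral_add {d' : X → H} (hd : IsBdd d) (hd' : IsBdd d') :
    (μ.integral fun y => d y + d' y) = μ.integral d + μ.integral d' := by
  refine ext_inner_right ℝ fun x => ?_
  rw [integral_inner (hd.add hd'), inner_add_left, integral_inner hd, integral_inner hd',
    ← apply_add]
  simp only [inner_add_left]

theorem integral_smul (hd : IsBdd d) (a : ℝ) :
    (μ.integral fun y => a • d y) = a • μ.integral d := by
  refine ext_inner_right ℝ fun x => ?_
  rw [integral_inner (hd.smul a), real_inner_smul_left, integral_inner hd, ← apply_const_mul]
  simp only [real_inner_smul_left]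

theorem norm_integral_le {C : ℝ} (hC : ∀ y, ‖d y‖ ≤ C) : ‖μ.integral d‖ ≤ C := by
  rcases (norm_nonneg (μ.integral d)).eq_or_lt with h0 | hpos
  · obtain ⟨y⟩ : Nonempty X := by
      by_contra hX
      rw [not_nonempty_iff] at hX
      simpa [Subsingleton.elim (fun _ : X => (1 : ℝ)) fun _ => 0] using μ.apply_const 1
    exact h0 ▸ (norm_nonneg _).trans (hC y)
  · refine le_of_mul_le_mul_right ?_ hpos
    rw [← real_inner_self_eq_norm_mul_norm, integral_inner ⟨C, hC⟩]
    exact (le_abs_self _).trans (abs_apply_le fun y => (abs_real_inner_le_norm _ _).trans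
      (mul_le_mul_of_nonneg_right (hC y) hpos.le))

theorem map_integral (L : H →L[ℝ] H) (hd : IsBdd d) :
    L (μ.integral d) = μ.integral fun y => L (d y) := by
  have hLd : IsBdd fun y => L (d y) := by
    obtain ⟨C, hC⟩ := hd
    exact ⟨‖L‖ * C, fun y => L.le_opNorm_of_le (hC y)⟩
  refine ext_inner_right ℝ fun x => ?_
  simp only [← L.adjoint_inner_right, integral_inner hd, integral_inner hLd]

end Mean

section Bessel

variable {z : X → H} {C : ℝ}

theorem sum_sq_inner_le_of_pairwise (hz : Pairwise fun i j => ⟪z i, z j⟫_ℝ = 0)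
    (hC : ∀ i, ‖z i‖ ≤ C) (F : H) (s : Finset X) :
    ∑ i ∈ s, ⟪F, z i⟫_ℝ ^ 2 ≤ C ^ 2 * ‖F‖ ^ 2 := by
  set S := ∑ i ∈ s, ⟪F, z i⟫_ℝ ^ 2
  let v := ∑ i ∈ s, ⟪F, z i⟫_ℝ • z i
  have inner_v : ⟪F, v⟫_ℝ = S := by
    simp only [v, S, inner_sum, real_inner_smul_right, sq]
  have norm_v : ‖v‖ ^ 2 ≤ C ^ 2 * S := by
    rw [← real_inner_self_eq_norm_sq, Finset.mul_sum, sum_inner]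
    refine Finset.sum_le_sum fun i hi => ?_
    rw [inner_sum, Finset.sum_eq_single_of_mem i hi fun j _ hj => by
      rw [real_inner_smul_left, real_inner_smul_right, hz hj.symm, mul_zero, mul_zero]]
    rw [real_inner_smul_left, real_inner_smul_right, real_inner_self_eq_norm_sq]
    have := pow_le_pow_left₀ (norm_nonneg _) (hC i) 2
    nlinarith [sq_nonneg ⟪F, z i⟫_ℝ]
  have cauchy_schwarz : S ^ 2 ≤ ‖F‖ ^ 2 * ‖v‖ ^ 2 := by
    rw [← inner_v, ← mul_pow, ← sq_abs]
    exact pow_le_pow_left₀ (abs_nonneg _) (abs_real_inner_le_norm F v) 2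
  have hS : 0 ≤ S := Finset.sum_nonneg fun i _ => sq_nonneg _
  rcases hS.eq_or_lt with h0 | hpos
  · rw [← h0]; positivity
  · refine le_of_mul_le_mul_right ?_ hpos
    nlinarith [mul_le_mul_of_nonneg_left norm_v (sq_nonneg ‖F‖)]

theorem tendsto_cofinite_zero_of_sum_le {f : X → ℝ} {B : ℝ} {good : Set X}
    (hgood : ∀ᶠ x in cofinite, x ∈ good) (hf : ∀ x, 0 ≤ f x)
    (hB : ∀ s : Finset X, ↑s ⊆ good → ∑ x ∈ s, f x ≤ B) : Tendsto f cofinite (𝓝 0) := by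
  classical
  have hsum : Summable (good.indicator f) :=
    summable_of_sum_le (Set.indicator_nonneg fun x _ => hf x) fun s => by
      rw [Finset.sum_indicator_eq_sum_filter]
      exact hB _ fun x hx => (Finset.mem_filter.1 hx).2
  refine hsum.tendsto_cofinite_zero.congr' ?_
  filter_upwards [hgood] with x hx using Set.indicator_of_mem hx f

theorem sum_sq_inner_comp_le_of_pairwise {ι : Type*} [DecidableEq X]
    (hz : Pairwise fun i j => ⟪z i, z j⟫_ℝ = 0) (hC : ∀ i, ‖z i‖ ≤ C) (F : H) {s : Finset ι}
    {φ : ι → X} {n : ℕ} (hφ : ∀ x, {i ∈ s | φ i = x}.card ≤ n) :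
    ∑ i ∈ s, ⟪F, z (φ i)⟫_ℝ ^ 2 ≤ n * (C ^ 2 * ‖F‖ ^ 2) := by
  rw [Finset.sum_comp (fun x => ⟪F, z x⟫_ℝ ^ 2) φ]
  calc ∑ x ∈ s.image φ, {i ∈ s | φ i = x}.card • ⟪F, z x⟫_ℝ ^ 2
      ≤ ∑ x ∈ s.image φ, n * ⟪F, z x⟫_ℝ ^ 2 := Finset.sum_le_sum fun x _ => by
        rw [nsmul_eq_mul]
        exact mul_le_mul_of_nonneg_right (mod_cast hφ x) (sq_nonneg _)
    _ ≤ n * (C ^ 2 * ‖F‖ ^ 2) := by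
        rw [← Finset.mul_sum]
        exact mul_le_mul_of_nonneg_left (sum_sq_inner_le_of_pairwise hz hC F _) n.cast_nonneg

theorem tendsto_zero_of_sq {f : X → ℝ} {l : Filter X} (h : Tendsto (fun x => f x ^ 2) l (𝓝 0)) :
    Tendsto f l (𝓝 0) :=
  (tendsto_zero_iff_abs_tendsto_zero f).2
    (by simpa [Real.sqrt_sq_eq_abs, Function.comp_def] using h.sqrt)

theorem tendsto_inner_cofinite_of_pairwise (hz : Pairwise fun i j => ⟪z i, z j⟫_ℝ = 0)
    (hC : ∀ i, ‖z i‖ ≤ C) (F : H) : Tendsto (fun i => ⟪F, z i⟫_ℝ) cofinite (𝓝 0) :=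
  tendsto_zero_of_sq <| tendsto_cofinite_zero_of_sum_le (good := Set.univ) (by simp)
    (fun _ => sq_nonneg _)
    fun s _ => sum_sq_inner_le_of_pairwise hz hC F s

end Bessel

end Hilbert

section LinFactor

variable {K : Type*} [Field K]

open Classical in
/-- The unit with value `x`, with junk value `1` at `x = 0`. -/
noncomputable def toUnit (x : K) : Kˣ := if h : x = 0 then 1 else Units.mk0 x h

theorem val_toUnit {x : K} (hx : x ≠ 0) : (toUnit x : K) = x := by simp [toUnit, hx]

@[simp]
theorem toUnit_val (u : Kˣ) : toUnit (u : K) = u := Units.ext (val_toUnit u.ne_zero)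

theorem toUnit_mul {x y : K} (hx : x ≠ 0) (hy : y ≠ 0) : toUnit (x * y) = toUnit x * toUnit y :=
  Units.ext (by rw [Units.val_mul, val_toUnit (mul_ne_zero hx hy), val_toUnit hx, val_toUnit hy])

/-- The function `y ↦ y - h`, made unit-valued by a junk value at `h`. -/
noncomputable def linFactor (h y : K) : Kˣ := toUnit (y - h)

/-- The function `y ↦ (y - p) (y - q) / (p - q)`, made unit-valued. -/
noncomputable def quadFactor (p q : K) : K → Kˣ :=
  const K (toUnit (p - q))⁻¹ * linFactor p * linFactor q

theorem linFactor_affine (a : Kˣ) (b h : K) :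
    (fun y => linFactor (a * h + b) (a * y + b)) =ᶠ[cofinite] const K a * linFactor h := by
  filter_upwards [eventually_cofinite_ne h] with y hy
  have : (a * y + b) - (a * h + b) = a * (y - h) := by ring
  rw [linFactor, this, toUnit_mul a.ne_zero (sub_ne_zero.2 hy), toUnit_val]
  rfl

theorem toUnit_affine_sub (a : Kˣ) (b : K) {p q : K} (hpq : p ≠ q) :
    toUnit ((a * p + b) - (a * q + b)) = a * toUnit (p - q) := by
  have : (a * p + b) - (a * q + b) = a * (p - q) := by ring
  rw [this, toUnit_mul a.ne_zero (sub_ne_zero.2 hpq), toUnit_val]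

theorem quadFactor_affine (a : Kˣ) (b : K) {p q : K} (hpq : p ≠ q) :
    (fun y => quadFactor (a * p + b) (a * q + b) (a * y + b)) =ᶠ[cofinite]
      const K a * quadFactor p q := by
  filter_upwards [linFactor_affine a b p, linFactor_affine a b q] with y hp hq
  simp only [quadFactor, Pi.mul_apply, const_apply, toUnit_affine_sub a b hpq, hp, hq]
  ext
  push_cast
  field_simp

end LinFactor

/-- An isometric representation of the group of functions `K → Kˣ` (modulo changes at finitely
many points), extended by the affine group of `K`, with an affinely fixed vector `ξ`. The model is
`P w f (y, g) = f (y, w y * g)` and `U a b f (y, g) = f (a * y + b, g)` for functions `f` on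
`K × Kˣ`; the field `inner_P` expresses that inner products of `P w ξ` are computed fibrewise. -/
structure CocycleRep (K H : Type*) [Field K] [NormedAddCommGroup H] [InnerProductSpace ℝ H] where
  /-- The mean on the base `K`. -/
  m : Mean K
  /-- The fibrewise multiplications. -/
  P : (K → Kˣ) →* (H →ₗᵢ[ℝ] H)
  /-- The affine substitutions `y ↦ a * y + b` on the base. -/
  U : Kˣ → K → H →ₗᵢ[ℝ] H
  /-- The fixed vector. -/
  ξ : H
  isAffineInvariant : m.IsAffineInvariant
  P_congr : ∀ {w w' : K → Kˣ}, w =ᶠ[cofinite] w' → P w = P w'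
  U_P : ∀ a b w v, U a b (P w v) = P (fun y => w (a * y + b)) (U a b v)
  U_ξ : ∀ a b, U a b ξ = ξ
  inner_P : ∀ w w', ⟪P w ξ, P w' ξ⟫_ℝ = m fun y => ⟪P (const K (w y)) ξ, P (const K (w' y)) ξ⟫_ℝ

namespace CocycleRep

variable {K H : Type*} [Field K] [NormedAddCommGroup H] [InnerProductSpace ℝ H]
  (π : CocycleRep K H)

theorem P_const_one (v : H) : π.P (const K 1) v = v := DFunLike.congr_fun (map_one π.P) v

theorem P_mul_apply (w w' : K → Kˣ) (v : H) : π.P (w * w') v = π.P w (π.P w' v) := by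
  rw [map_mul]; rfl

theorem P_comm (w w' : K → Kˣ) (v : H) : π.P w (π.P w' v) = π.P w' (π.P w v) := by
  rw [← P_mul_apply, mul_comm, P_mul_apply]

theorem inner_P_left (w : K → Kˣ) (x v : H) : ⟪x, π.P w v⟫_ℝ = ⟪π.P w⁻¹ x, v⟫_ℝ := by
  rw [← (π.P w⁻¹).inner_map_map, ← P_mul_apply, inv_mul_cancel]
  exact congrArg _ (π.P_const_one v)

theorem inner_P_P (w w' : K → Kˣ) (v v' : H) :
    ⟪π.P w v, π.P w' v'⟫_ℝ = ⟪v, π.P (w⁻¹ * w') v'⟫_ℝ := by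
  rw [← (π.P w).inner_map_map v, ← P_mul_apply, mul_inv_cancel_left]

theorem isBdd_P {X : Type*} (w : X → K → Kˣ) (v : H) : IsBdd fun x => π.P (w x) v :=
  ⟨‖v‖, fun x => ((π.P (w x)).norm_map v).le⟩

theorem U_linFactor (a : Kˣ) (b h : K) (v : H) :
    π.U a b (π.P (linFactor (a * h + b)) v) =
      π.P (const K a) (π.P (linFactor h) (π.U a b v)) := by
  rw [U_P, π.P_congr (linFactor_affine a b h), P_mul_apply]

/-- A vector on which the affine group acts through the character `a ↦ P (a ^ i)`. -/
def IsHomogeneous (i : ℕ) (v : H) : Prop := ∀ a b, π.U a b v = π.P (const K (a ^ i)) v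

theorem isHomogeneous_ξ : π.IsHomogeneous 0 π.ξ := fun a b => by
  rw [U_ξ, pow_zero, P_const_one]

theorem U_quadFactor_ξ (a : Kˣ) (b : K) {p q : K} (hpq : p ≠ q) :
    π.U a b (π.P (quadFactor (a * p + b) (a * q + b)) π.ξ) =
      π.P (const K a) (π.P (quadFactor p q) π.ξ) := by
  rw [U_P, π.P_congr (quadFactor_affine a b hpq), U_ξ, P_mul_apply]

section Average

variable [CompleteSpace H]

/-- The average of `P (linFactor h)` over `h`. -/
noncomputable def T : H →L[ℝ] H :=
  LinearMap.mkContinuous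
    { toFun := fun v => π.m.integral fun h => π.P (linFactor h) v
      map_add' := fun v v' => by
        simp only [map_add, Mean.integral_add (π.isBdd_P _ _) (π.isBdd_P _ _)]
      map_smul' := fun a v => by
        simp only [map_smul, Mean.integral_smul (π.isBdd_P _ _), RingHom.id_apply] }
    1 fun v => by
      rw [one_mul]
      exact Mean.norm_integral_le fun _ => ((π.P _).norm_map v).le

theorem T_apply (v : H) : π.T v = π.m.integral fun h => π.P (linFactor h) v := rfl

theorem norm_T_apply_le (v : H) : ‖π.T v‖ ≤ ‖v‖ :=
  Mean.norm_integral_le fun _ => ((π.P _).norm_map v).le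

theorem inner_T (x v : H) : ⟪x, π.T v⟫_ℝ = π.m fun h => ⟪x, π.P (linFactor h) v⟫_ℝ :=
  Mean.inner_integral (π.isBdd_P _ _) x

theorem P_T (w : K → Kˣ) (v : H) : π.P w (π.T v) = π.T (π.P w v) := by
  simp only [T_apply, π.P_comm _ w]
  exact Mean.map_integral (π.P w).toContinuousLinearMap (π.isBdd_P _ _)

theorem U_T (a : Kˣ) (b : K) (v : H) : π.U a b (π.T v) = π.P (const K a) (π.T (π.U a b v)) := by
  refine ext_inner_left ℝ fun x => ?_
  have hU : π.U a b (π.T v) = π.m.integral fun h => π.U a b (π.P (linFactor h) v) :=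
    Mean.map_integral (π.U a b).toContinuousLinearMap (π.isBdd_P _ _)
  have hbdd : IsBdd fun h => π.U a b (π.P (linFactor h) v) :=
    (π.isBdd_P _ v).mono fun h => ((π.U a b).norm_map _).le
  rw [hU, Mean.inner_integral hbdd, P_T, inner_T,
    ← π.isAffineInvariant a b _ ((IsBdd.const x).inner hbdd)]
  simp only [U_linFactor, π.P_comm (const K a)]

variable {π} in
theorem IsHomogeneous.T {i : ℕ} {v : H} (hv : π.IsHomogeneous i v) :
    π.IsHomogeneous (i + 1) (π.T v) := fun a b => by
  rw [U_T, hv, ← P_T, ← P_mul_apply, pow_succ']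
  rfl

/-- The deviation of `P (linFactor h) v` from its average. -/
noncomputable def fluct (v : H) (h : K) : H := π.P (linFactor h) v - π.T v

theorem norm_fluct_le (v : H) (h : K) : ‖π.fluct v h‖ ≤ 2 * ‖v‖ := by
  rw [two_mul]
  exact norm_sub_le_of_le ((π.P _).norm_map v).le (π.norm_T_apply_le v)

theorem mean_inner_P_fluct (x v : H) (w : K → Kˣ) :
    (π.m fun h => ⟪x, π.P w (π.fluct v h)⟫_ℝ) = 0 := by
  simp only [fluct, map_sub, inner_sub_right, Mean.apply_sub, Mean.apply_const, π.P_comm w, P_T,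
    ← inner_T, sub_self]

variable {π} in
theorem IsHomogeneous.U_fluct {i : ℕ} {v : H} (hv : π.IsHomogeneous i v) (a : Kˣ) (b h : K) :
    π.U a b (π.fluct v (a * h + b)) = π.P (const K (a ^ (i + 1))) (π.fluct v h) := by
  rw [fluct, map_sub, U_linFactor, hv a b, hv.T a b, fluct, map_sub, π.P_comm (linFactor h),
    ← P_mul_apply, pow_succ']
  rfl

variable {π} in
theorem IsHomogeneous.inner_fluct_affine {i : ℕ} {v : H} (hv : π.IsHomogeneous i v) (u a : Kˣ)
    (b h h' : K) :
    ⟪π.fluct v (a * h + b), π.P (const K u) (π.fluct v (a * h' + b))⟫_ℝ =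
      ⟪π.fluct v h, π.P (const K u) (π.fluct v h')⟫_ℝ := by
  rw [← (π.U a b).inner_map_map, U_P, hv.U_fluct, hv.U_fluct, P_comm]
  exact (π.P _).inner_map_map _ _

variable {π} in
theorem IsHomogeneous.inner_fluct_eq_zero [Infinite K] {i : ℕ} {v : H} (hv : π.IsHomogeneous i v)
    (u u' : Kˣ) {h h' : K} (hne : h ≠ h') :
    ⟪π.P (const K u) (π.fluct v h), π.P (const K u') (π.fluct v h')⟫_ℝ = 0 := by
  rw [inner_P_P]
  -- affine covariance makes the inner product independent of `h'`, so it equals its average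
  rw [← π.mean_inner_P_fluct (π.fluct v h) v ((const K u)⁻¹ * const K u'), ←
    π.m.apply_const ⟪π.fluct v h, _⟫_ℝ]
  refine (π.isAffineInvariant.isDiffuse.apply_congr ?_).symm
  filter_upwards [eventually_cofinite_ne h] with t ht
  let a := toUnit ((t - h) / (h' - h))
  have ha : (a : K) = (t - h) / (h' - h) :=
    val_toUnit (div_ne_zero (sub_ne_zero.2 ht) (sub_ne_zero.2 hne.symm))
  have h_eq : h = a * h + (h - a * h) := by ring
  have t_eq : t = a * h' + (h - a * h) := by
    rw [ha]
    field_simp [sub_ne_zero.2 hne.symm]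
    ring
  have key := hv.inner_fluct_affine (u⁻¹ * u') a (h - a * h) h h'
  rwa [← h_eq, ← t_eq] at key

end Average

section Defect

variable [CompleteSpace H]

/-- The contribution of the second root `q` to the fluctuation of `P (quadFactor p q) ξ`. -/
noncomputable def quadFluct (p q : K) : H :=
  π.P (const K (toUnit (p - q))⁻¹ * linFactor p) (π.fluct π.ξ q)

/-- The deviation of `P (quadFactor p q) ξ` from its double average. -/
noncomputable def defect (p q : K) : H :=
  π.P (quadFactor p q) π.ξ - π.P (const K (toUnit (p - q))⁻¹) (π.T (π.T π.ξ))

theorem defect_eq_add (p q : K) : π.defect p q =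
    π.quadFluct p q + π.P (const K (toUnit (p - q))⁻¹) (π.fluct (π.T π.ξ) p) := by
  simp only [defect, quadFluct, quadFactor, fluct, P_mul_apply, map_sub]
  abel

theorem norm_quadFluct_le (p q : K) : ‖π.quadFluct p q‖ ≤ 2 * ‖π.ξ‖ :=
  ((π.P _).norm_map _).trans_le (π.norm_fluct_le π.ξ q)

theorem isBdd_defect {X : Type*} (p q : X → K) : IsBdd fun x => π.defect (p x) (q x) :=
  (π.isBdd_P _ _).sub (π.isBdd_P _ _)

theorem isBdd_quadFluct {X : Type*} (p q : X → K) : IsBdd fun x => π.quadFluct (p x) (q x) :=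
  ⟨_, fun x => π.norm_quadFluct_le (p x) (q x)⟩

theorem U_quadFluct (a : Kˣ) (b : K) {p q : K} (hpq : p ≠ q) :
    π.U a b (π.quadFluct (a * p + b) (a * q + b)) = π.P (const K a) (π.quadFluct p q) := by
  have hw : (fun y => (const K (toUnit (a * p + b - (a * q + b)))⁻¹ * linFactor (a * p + b))
      (a * y + b)) =ᶠ[cofinite] const K (toUnit (p - q))⁻¹ * linFactor p := by
    filter_upwards [linFactor_affine a b p] with y hy
    simp only [Pi.mul_apply, const_apply, toUnit_affine_sub a b hpq, hy]
    ext
    push_cast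
    field_simp
  rw [quadFluct, U_P, π.P_congr hw, π.isHomogeneous_ξ.U_fluct, P_comm, zero_add, pow_one, quadFluct]

theorem inner_quadFactor_quadFluct (a : Kˣ) (b : K) {r t : K} (hrt : r ≠ t) :
    ⟪π.P (quadFactor b (a + b)) π.ξ, π.quadFluct (a * r + b) (a * t + b)⟫_ℝ =
      ⟪π.P (quadFactor 0 1) π.ξ, π.quadFluct r t⟫_ℝ := by
  have hU := π.U_quadFactor_ξ a b (zero_ne_one (α := K))
  rw [mul_zero, zero_add, mul_one] at hU
  rw [← (π.U a b).inner_map_map, hU, U_quadFluct π a b hrt, LinearIsometry.inner_map_map]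

variable [Infinite K]

theorem pairwise_inner_quadFluct (p : K) :
    Pairwise fun q q' => ⟪π.quadFluct p q, π.quadFluct p q'⟫_ℝ = 0 := fun q q' hne => by
  simp only [quadFluct, mul_comm _ (linFactor p), P_mul_apply, LinearIsometry.inner_map_map]
  exact π.isHomogeneous_ξ.inner_fluct_eq_zero _ _ hne

variable {π} in
theorem IsHomogeneous.mean_inner_fluct_eq_zero {i : ℕ} {v : H} (hv : π.IsHomogeneous i v)
    {μ : Mean K} (hμ : μ.IsDiffuse) (x : H) (u : K → Kˣ) :
    (μ fun p => ⟪x, π.P (const K (u p)) (π.fluct v p)⟫_ℝ) = 0 :=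
  hμ.apply_eq_zero_of_tendsto <| tendsto_inner_cofinite_of_pairwise
    (fun _ _ hne => hv.inner_fluct_eq_zero _ _ hne)
    (fun p => ((π.P _).norm_map _).trans_le (π.norm_fluct_le v p)) x

/-- Translating `p` to the origin turns `quadFluct p (φ p)` into the orthogonal family
`quadFluct 0`, evaluated at `φ p - p`. -/
theorem mean_inner_quadFluct_eq_zero {μ : Mean K} (hμ : μ.IsDiffuse) {x : H}
    (hx : ∀ b, π.U 1 b x = x) {φ : K → K} (hφ : Tendsto (fun p => φ p - p) cofinite cofinite) :
    (μ fun p => ⟪x, π.quadFluct p (φ p)⟫_ℝ) = 0 := by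
  have decay := tendsto_inner_cofinite_of_pairwise (π.pairwise_inner_quadFluct 0)
    (π.norm_quadFluct_le 0) x
  refine hμ.apply_eq_zero_of_tendsto ((decay.comp hφ).congr' ?_)
  filter_upwards [hφ.eventually (eventually_cofinite_ne 0)] with p hp
  have hU := π.U_quadFluct 1 p hp.symm
  rw [Units.val_one, one_mul, zero_add, one_mul, sub_add_cancel] at hU
  rw [← (π.U 1 p).inner_map_map x (π.quadFluct p (φ p)), hx, hU]
  simp only [P_const_one, comp_apply]

end Defect

end CocycleRep

section Quadratic

variable {K : Type*} [Field K]

theorem eventually_quadratic_ne_zero (b c : K) : ∀ᶠ p in cofinite, p ^ 2 + b * p + c ≠ 0 := by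
  have monic : (Polynomial.X ^ 2 + Polynomial.C b * Polynomial.X + Polynomial.C c).Monic := by
    monicity!
  refine (Polynomial.finite_setOfPred_isRoot monic.ne_zero).subset fun p hp => ?_
  simpa using hp

theorem eventually_sq_add_ne_zero (c : K) : ∀ᶠ p in cofinite, p ^ 2 + c ≠ 0 := by
  simpa using eventually_quadratic_ne_zero 0 c

theorem tendsto_neg_div_sub_cofinite (s : K) :
    Tendsto (fun p => -s / p - p) cofinite cofinite := by
  refine Tendsto.cofinite_of_finite_preimage_singleton fun c => ?_
  suffices h : ∀ᶠ p in cofinite, -s / p - p ≠ c by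
    exact Set.Finite.subset h fun p hp => not_not.2 hp
  filter_upwards [eventually_quadratic_ne_zero c s, eventually_cofinite_ne 0] with p hp hp0 h
  apply hp
  rw [← h]
  field_simp
  ring

/-- The affine map sending `0, 1` to `p, -s / p` sends `r, partner s r p` to a pair of the same
form `p', -s / p'`. -/
def partner (s r p : K) : K := (1 - r) * p ^ 2 / ((1 - r) * p ^ 2 - s * r)

variable {s r p : K}

theorem mul_affine_pair (hp : p ≠ 0) :
    p * ((-s / p - p) * r + p) = (1 - r) * p ^ 2 - s * r := by
  field_simp
  ring

theorem neg_div_sub_ne_zero (hp : p ≠ 0) (hps : p ^ 2 + s ≠ 0) : -s / p - p ≠ 0 := fun h => hps (by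
  field_simp at h
  linear_combination -h)

theorem neg_div_affine_pair (hp : p ≠ 0) (hp' : (-s / p - p) * r + p ≠ 0) :
    -s / ((-s / p - p) * r + p) = (-s / p - p) * partner s r p + p := by
  have hmul := mul_affine_pair (s := s) (r := r) hp
  have hden : (1 - r) * p ^ 2 - s * r ≠ 0 := hmul ▸ mul_ne_zero hp hp'
  rw [partner]
  generalize hD : (1 - r) * p ^ 2 - s * r = D at hmul hden ⊢
  rw [eq_div_of_mul_eq hp ((mul_comm _ _).trans hmul)]
  field_simp
  linear_combination hD

theorem sq_eq_sq_of_partner_eq (hs : s ≠ 0) (hr0 : r ≠ 0) (hr1 : r ≠ 1) {p' : K}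
    (hp : (1 - r) * p ^ 2 - s * r ≠ 0) (hp' : (1 - r) * p' ^ 2 - s * r ≠ 0)
    (h : partner s r p = partner s r p') : p ^ 2 = p' ^ 2 := by
  rw [partner, partner, div_eq_div_iff hp hp'] at h
  have : s * r * (1 - r) * (p ^ 2 - p' ^ 2) = 0 := by linear_combination -h
  have hne : s * r * (1 - r) ≠ 0 := mul_ne_zero (mul_ne_zero hs hr0) (sub_ne_zero.2 hr1.symm)
  exact sub_eq_zero.1 ((mul_eq_zero.1 this).resolve_left hne)

theorem card_partner_fiber_le [DecidableEq K] (hs : s ≠ 0) (hr0 : r ≠ 0) (hr1 : r ≠ 1)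
    {S : Finset K} (hS : ∀ p ∈ S, (1 - r) * p ^ 2 - s * r ≠ 0) (t : K) :
    {p ∈ S | partner s r p = t}.card ≤ 2 := by
  rcases Finset.eq_empty_or_nonempty {p ∈ S | partner s r p = t} with h | ⟨p₀, hp₀⟩
  · simp [h]
  · refine (Finset.card_le_card (t := {p₀, -p₀}) fun p hp => ?_).trans Finset.card_le_two
    rw [Finset.mem_filter] at hp hp₀
    simpa [sq_eq_sq_iff_eq_or_eq_neg] using
      sq_eq_sq_of_partner_eq hs hr0 hr1 (hS p hp.1) (hS p₀ hp₀.1) (hp.2.trans hp₀.2.symm)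

end Quadratic

namespace CocycleRep

variable {K H : Type*} [Field K] [NormedAddCommGroup H] [InnerProductSpace ℝ H] [CompleteSpace H]
  (π : CocycleRep K H) {s : K}

theorem inner_quadFactor_quadFluct_pair {p r : K} (hp : p ≠ 0) (hps : p ^ 2 + s ≠ 0)
    (hp' : (-s / p - p) * r + p ≠ 0) (hps' : ((-s / p - p) * r + p) ^ 2 + s ≠ 0) :
    ⟪π.P (quadFactor p (-s / p)) π.ξ,
        π.quadFluct ((-s / p - p) * r + p) (-s / ((-s / p - p) * r + p))⟫_ℝ =
      ⟪π.P (quadFactor 0 1) π.ξ, π.quadFluct r (partner s r p)⟫_ℝ := by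
  have hrt : r ≠ partner s r p := fun h => hps' (by
    have := neg_div_affine_pair hp hp'
    rw [← h, div_eq_iff hp'] at this
    linear_combination -this)
  have := π.inner_quadFactor_quadFluct (toUnit (-s / p - p)) p hrt
  rwa [val_toUnit (neg_div_sub_ne_zero hp hps), sub_add_cancel,
    ← neg_div_affine_pair hp hp'] at this

variable [Infinite K] {μ : Mean K} (hs : s ≠ 0) (hμ : μ.IsAffineInvariant)
include hs hμ

theorem sum_mean_sq_inner_le {S : Finset K} (hS : ∀ p ∈ S, p ≠ 0 ∧ p ^ 2 + s ≠ 0) :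
    ∑ p ∈ S, μ (fun p' =>
        ⟪π.P (quadFactor p (-s / p)) π.ξ, π.quadFluct p' (-s / p')⟫_ℝ ^ 2) ≤
      2 * ((2 * ‖π.ξ‖) ^ 2 * ‖π.ξ‖ ^ 2) := by
  classical
  have slope_ne {p : K} (hp : p ∈ S) : -s / p - p ≠ 0 :=
    neg_div_sub_ne_zero (hS p hp).1 (hS p hp).2
  have reparam : ∀ p ∈ S, μ (fun p' =>
      ⟪π.P (quadFactor p (-s / p)) π.ξ, π.quadFluct p' (-s / p')⟫_ℝ ^ 2) =
      μ fun r => ⟪π.P (quadFactor p (-s / p)) π.ξ,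
        π.quadFluct ((-s / p - p) * r + p) (-s / ((-s / p - p) * r + p))⟫_ℝ ^ 2 := fun p hp => by
    have := hμ (toUnit (-s / p - p)) p _
      (((IsBdd.const (π.P (quadFactor p (-s / p)) π.ξ)).inner
        (π.isBdd_quadFluct id fun p' => -s / p')).pow 2)
    rw [val_toUnit (slope_ne hp)] at this
    exact this.symm
  have good_pairs : ∀ᶠ r in cofinite, ∀ p ∈ S,
      (-s / p - p) * r + p ≠ 0 ∧ ((-s / p - p) * r + p) ^ 2 + s ≠ 0 := by
    refine (eventually_all_finset S).2 fun p hp => ?_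
    have inj : Injective fun r => (-s / p - p) * r + p :=
      (add_left_injective p).comp (mul_right_injective₀ (slope_ne hp))
    exact inj.tendsto_cofinite.eventually
      ((eventually_cofinite_ne 0).and (eventually_sq_add_ne_zero s))
  rw [Finset.sum_congr rfl reparam, ← Mean.apply_sum]
  refine (le_abs_self _).trans
    (hμ.isDiffuse.abs_apply_le_of_eventually (by positivity) ?_)
  filter_upwards [eventually_cofinite_ne 0, eventually_cofinite_ne 1, good_pairs] with r hr0 hr1 hr
  rw [abs_of_nonneg (Finset.sum_nonneg fun p _ => sq_nonneg _), Finset.sum_congr rfl fun p hp => by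
    rw [π.inner_quadFactor_quadFluct_pair (hS p hp).1 (hS p hp).2 (hr p hp).1 (hr p hp).2]]
  have bessel := sum_sq_inner_comp_le_of_pairwise (π.pairwise_inner_quadFluct r)
    (π.norm_quadFluct_le r) (π.P (quadFactor 0 1) π.ξ)
    (card_partner_fiber_le hs hr0 hr1 fun p hp =>
      mul_affine_pair (hS p hp).1 ▸ mul_ne_zero (hS p hp).1 (hr p hp).1)
  rwa [LinearIsometry.norm_map, Nat.cast_ofNat] at bessel

theorem mean_mean_inner_quadFluct_eq_zero :
    (μ fun p => μ fun p' =>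
      ⟪π.P (quadFactor p (-s / p)) π.ξ, π.quadFluct p' (-s / p')⟫_ℝ) = 0 := by
  refine hμ.isDiffuse.apply_eq_zero_of_tendsto (tendsto_zero_of_sq ?_)
  have bdd (p : K) :
      IsBdd fun p' => ⟪π.P (quadFactor p (-s / p)) π.ξ, π.quadFluct p' (-s / p')⟫_ℝ :=
    (IsBdd.const _).inner (π.isBdd_quadFluct _ _)
  refine squeeze_zero (fun p => sq_nonneg _) (fun p => Mean.sq_apply_le (bdd p)) ?_
  exact tendsto_cofinite_zero_of_sum_le
    ((eventually_cofinite_ne 0).and (eventually_sq_add_ne_zero s))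
    (fun p => Mean.nonneg ((bdd p).pow 2) fun p' => sq_nonneg _)
    fun S hS => π.sum_mean_sq_inner_le hs hμ fun p hp => hS hp

theorem mean_inner_defect_eq_zero (x : H) : (μ fun p => ⟪x, π.defect p (-s / p)⟫_ℝ) = 0 := by
  have drop_first_root (x : H) : (μ fun p => ⟪x, π.defect p (-s / p)⟫_ℝ) =
      μ fun p => ⟪x, π.quadFluct p (-s / p)⟫_ℝ := by
    simp only [defect_eq_add, inner_add_right, Mean.apply_add]
    rw [π.isHomogeneous_ξ.T.mean_inner_fluct_eq_zero hμ.isDiffuse, add_zero]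
  have drop_average (p : K) : (μ fun p' => ⟪π.defect p (-s / p), π.quadFluct p' (-s / p')⟫_ℝ) =
      μ fun p' => ⟪π.P (quadFactor p (-s / p)) π.ξ, π.quadFluct p' (-s / p')⟫_ℝ := by
    simp only [defect, inner_sub_left, Mean.apply_sub]
    rw [sub_eq_self]
    refine π.mean_inner_quadFluct_eq_zero hμ.isDiffuse (fun b => ?_)
      (tendsto_neg_div_sub_cofinite s)
    rw [U_P, π.isHomogeneous_ξ.T.T, one_pow, P_const_one]
    rfl
  have bdd : IsBdd fun p => π.defect p (-s / p) := π.isBdd_defect _ _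
  have integral_eq_zero : μ.integral (fun p => π.defect p (-s / p)) = 0 := by
    rw [← inner_self_eq_zero (𝕜 := ℝ), Mean.integral_inner bdd]
    simp only [Mean.inner_integral bdd, drop_first_root, drop_average]
    exact π.mean_mean_inner_quadFluct_eq_zero hs hμ
  rw [← Mean.inner_integral bdd, integral_eq_zero, inner_zero_right]

end CocycleRep

section Ratio

variable {K : Type*} [Field K]

/-- The unit `(t² + s) / (2 * t)`: it is the ratio `x / y` in the parametrization
`x = t² + s`, `y = 2 * t`, `z = t² - s` of the solutions of `x² = s * y² + z²`. -/
noncomputable def ratio (s t : K) : Kˣ := toUnit ((t ^ 2 + s) / (2 * t))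

/-- The function `y ↦ y² + s`, made unit-valued. -/
noncomputable def normForm (s y : K) : Kˣ := toUnit (y ^ 2 + s)

/-- The involution of the projective line exchanging `p` with `∞` and `-s / p` with `0`; it equals
`(p * y + s) / (y - p)` for `y ≠ p`. -/
def mobius (s p y : K) : K := p + (p ^ 2 + s) / (y - p)

variable {s : K}

theorem mobius_affine (a : Kˣ) (b : K) {p : K} (hps : p ^ 2 + s ≠ 0)
    (hps' : (a * p + b) ^ 2 + s ≠ 0) (y : K) :
    a * mobius s p y + b = mobius s (a * p + b)
      (((a * p + b) ^ 2 + s) / (a * (p ^ 2 + s)) * (y - p) + (a * p + b)) := by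
  rw [mobius, mobius, add_sub_cancel_right]
  rcases eq_or_ne y p with rfl | hyp
  · simp
  · have := sub_ne_zero.2 hyp
    field_simp
    ring

variable [NeZero (2 : K)]

theorem inv_ratio_eq {p : K} (hp : p ≠ 0) (hps : p ^ 2 + s ≠ 0) :
    (ratio s p)⁻¹ = toUnit 2 * (toUnit (p - -s / p))⁻¹ := by
  have h2 : (2 : K) ≠ 0 := two_ne_zero
  have hδ : p - -s / p ≠ 0 := sub_ne_zero.2 (sub_ne_zero.1 (neg_div_sub_ne_zero hp hps)).symm
  have hr : (p ^ 2 + s) / (2 * p) ≠ 0 := div_ne_zero hps (mul_ne_zero h2 hp)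
  rw [inv_eq_iff_eq_inv, mul_inv_rev, inv_inv]
  ext
  rw [ratio, val_toUnit hr, Units.val_mul, Units.val_inv_eq_inv_val, val_toUnit h2, val_toUnit hδ]
  field_simp
  ring

theorem inv_ratio_eventuallyEq (s : K) :
    (ratio s)⁻¹ =ᶠ[cofinite] const K (toUnit 2) * linFactor 0 * (normForm s)⁻¹ := by
  filter_upwards [eventually_cofinite_ne 0, eventually_sq_add_ne_zero s] with t ht hts
  have h2 : (2 : K) ≠ 0 := two_ne_zero
  have hr : (t ^ 2 + s) / (2 * t) ≠ 0 := div_ne_zero hts (mul_ne_zero h2 ht)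
  ext
  simp only [ratio, linFactor, normForm, Pi.mul_apply, Pi.inv_apply, const_apply, sub_zero,
    Units.val_mul, Units.val_inv_eq_inv_val, val_toUnit hr, val_toUnit h2, val_toUnit ht,
    val_toUnit hts]
  field_simp

theorem inv_ratio_mobius_eventuallyEq {p : K} (hp : p ≠ 0) (hps : p ^ 2 + s ≠ 0) :
    (fun y => (ratio s (mobius s p y))⁻¹) =ᶠ[cofinite]
      const K (toUnit 2) * (normForm s)⁻¹ * quadFactor p (-s / p) := by
  filter_upwards [eventually_cofinite_ne p, eventually_cofinite_ne (-s / p),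
    eventually_sq_add_ne_zero s] with y hyp hyq hys
  have h2 : (2 : K) ≠ 0 := two_ne_zero
  have hy : y - p ≠ 0 := sub_ne_zero.2 hyp
  have hpy : p * y + s ≠ 0 := fun h => hyq (by field_simp; linear_combination h)
  have hδ : p - -s / p ≠ 0 := sub_ne_zero.2 (sub_ne_zero.1 (neg_div_sub_ne_zero hp hps)).symm
  have mobius_eq : mobius s p y = (p * y + s) / (y - p) := by
    rw [mobius]
    field_simp
    ring
  have ratio_eq : (mobius s p y ^ 2 + s) / (2 * mobius s p y) =
      (p ^ 2 + s) * (y ^ 2 + s) / (2 * (p * y + s) * (y - p)) := by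
    rw [mobius_eq]
    field_simp
    ring
  have hr : (p ^ 2 + s) * (y ^ 2 + s) / (2 * (p * y + s) * (y - p)) ≠ 0 :=
    div_ne_zero (mul_ne_zero hps hys) (mul_ne_zero (mul_ne_zero h2 hpy) hy)
  ext
  simp only [ratio, ratio_eq, quadFactor, linFactor, normForm, Pi.mul_apply, Pi.inv_apply,
    const_apply, Units.val_mul, Units.val_inv_eq_inv_val, val_toUnit hr, val_toUnit h2,
    val_toUnit hys, val_toUnit hδ, val_toUnit hy, val_toUnit (sub_ne_zero.2 hyq)]
  have hδ' : p ^ 2 + s = (p - -s / p) * p := by field_simp; ring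
  have hq' : p * y + s = (y - -s / p) * p := by field_simp; ring
  rw [hδ', hq']
  field_simp

end Ratio

namespace Mean

variable {K : Type*} [Field K] (s : K) {m μ : Mean K}

/-- The transition operator averaging a mean along `p ↦ mobius s p`. -/
def mobiusStep (m μ : Mean K) : Mean K := μ.bind fun p => m.map (mobius s p)

theorem mobiusStep_apply (f : K → ℝ) :
    mobiusStep s m μ f = μ fun p => m fun y => f (mobius s p y) := rfl

theorem isAffineInvariant_mobiusStep [Infinite K] (hm : m.IsAffineInvariant)
    (hμ : μ.IsAffineInvariant) : (mobiusStep s m μ).IsAffineInvariant := fun a b f hf => by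
  have bdd : IsBdd fun p => m fun y => f (mobius s p y) :=
    IsBdd.mean_apply (f := fun p y => f (mobius s p y)) (hf.comp _) fun _ => m
  rw [mobiusStep_apply, mobiusStep_apply, ← hμ a b _ bdd]
  refine hμ.isDiffuse.apply_congr ?_
  have affine_inj : Injective fun p : K => a * p + b :=
    (add_left_injective b).comp (mul_right_injective₀ a.ne_zero)
  filter_upwards [eventually_sq_add_ne_zero s,
    affine_inj.tendsto_cofinite.eventually (eventually_sq_add_ne_zero s)] with p hps hps'
  let c := toUnit (((a * p + b) ^ 2 + s) / (a * (p ^ 2 + s)))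
  have hc : (c : K) = ((a * p + b) ^ 2 + s) / (a * (p ^ 2 + s)) :=
    val_toUnit (div_ne_zero hps' (mul_ne_zero a.ne_zero hps))
  rw [← hm c (a * p + b - c * p) (fun y => f (mobius s (a * p + b) y)) (hf.comp _)]
  congr! 2 with y
  rw [mobius_affine a b hps hps', ← hc]
  congr 2
  ring

theorem exists_stationary [Infinite K] (hm : m.IsAffineInvariant) :
    ∃ ν : Mean K, ν.IsAffineInvariant ∧
    (∀ f : K → ℝ, IsBdd f → mobiusStep s m ν f = ν f) ∧
    ∀ f : K → ℝ, (∀ μ : Mean K, μ.IsAffineInvariant → mobiusStep s m μ f = μ f) → ν f = m f := by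
  obtain ⟨L, hL⟩ := exists_banach_limit
  let μ (n : ℕ) : Mean K := (mobiusStep s m)^[n] m
  have μ_succ (n : ℕ) : μ (n + 1) = mobiusStep s m (μ n) := iterate_succ_apply' _ _ _
  have hμ (n : ℕ) : (μ n).IsAffineInvariant := by
    induction n with
    | zero => exact hm
    | succ n ih => rw [μ_succ]; exact isAffineInvariant_mobiusStep s hm ih
  refine ⟨L.bind μ, fun a b f hf => ?_, fun f hf => ?_, fun f hf => ?_⟩
  · exact congrArg L (funext fun n => hμ n a b f hf)
  · refine Eq.trans ?_ (hL _ (IsBdd.mean_apply (f := fun _ => f) (hf.comp Prod.snd) μ))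
    exact congrArg L (funext fun n => DFunLike.congr_fun (μ_succ n).symm f)
  · have const (n : ℕ) : μ n f = m f := by
      induction n with
      | zero => rfl
      | succ n ih => rw [μ_succ, hf _ (hμ n), ih]
    exact (congrArg L (funext const)).trans (L.apply_const _)

end Mean

namespace CocycleRep

variable {K H : Type*} [Field K] [NormedAddCommGroup H] [InnerProductSpace ℝ H]
  (π : CocycleRep K H) (s : K) {μ : Mean K}

section RatioAverage

variable [CompleteSpace H]

/-- The average of `P (ratio t)⁻¹ ξ` over `t`. -/
noncomputable def ratioAverage (μ : Mean K) : H :=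
  μ.integral fun t => π.P (const K (ratio s t)⁻¹) π.ξ

/-- The contraction that realizes `Mean.mobiusStep` on ratio averages. -/
noncomputable def Z : H →L[ℝ] H := (π.P (normForm s)⁻¹).toContinuousLinearMap ∘L π.T ∘L π.T

theorem Z_apply (v : H) : π.Z s v = π.P (normForm s)⁻¹ (π.T (π.T v)) := rfl

theorem norm_Z_apply_le (v : H) : ‖π.Z s v‖ ≤ ‖v‖ :=
  ((π.P _).norm_map _).trans_le ((π.norm_T_apply_le _).trans (π.norm_T_apply_le v))

theorem norm_Z_le : ‖π.Z s‖ ≤ 1 :=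
  (π.Z s).opNorm_le_bound zero_le_one fun v => (one_mul ‖v‖).symm ▸ π.norm_Z_apply_le s v

theorem P_Z (w : K → Kˣ) (v : H) : π.P w (π.Z s v) = π.Z s (π.P w v) := by
  rw [Z_apply, P_comm, π.P_T w, π.P_T w, Z_apply]

theorem inner_ratioAverage (x : H) :
    ⟪x, π.ratioAverage s μ⟫_ℝ = μ fun t => ⟪x, π.P (const K (ratio s t)⁻¹) π.ξ⟫_ℝ :=
  Mean.inner_integral (π.isBdd_P _ _) x

theorem ratioAverage_inner (x : H) :
    ⟪π.ratioAverage s μ, x⟫_ℝ = μ fun t => ⟪π.P (const K (ratio s t)⁻¹) π.ξ, x⟫_ℝ :=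
  Mean.integral_inner (π.isBdd_P _ _) x

theorem U_ratioAverage (a : Kˣ) (b : K) : π.U a b (π.ratioAverage s μ) = π.ratioAverage s μ :=
  (Mean.map_integral (π.U a b).toContinuousLinearMap (π.isBdd_P _ _)).trans <| by
    simp only [LinearIsometry.coe_toContinuousLinearMap, U_P, U_ξ]
    rfl

variable {s} [Infinite K] [NeZero (2 : K)]

theorem inner_P_inv_ratio_mobius (hs : s ≠ 0) (hμ : μ.IsAffineInvariant) (x : H) :
    (μ fun p => ⟪x, π.P (fun y => (ratio s (mobius s p y))⁻¹) π.ξ⟫_ℝ) =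
      ⟪x, π.Z s (π.ratioAverage s μ)⟫_ℝ := by
  let W : K → Kˣ := const K (toUnit 2) * (normForm s)⁻¹
  have moved (p : K) (hp : p ≠ 0) (hps : p ^ 2 + s ≠ 0) :
      ⟪π.P W⁻¹ x, π.defect p (-s / p)⟫_ℝ =
        ⟪x, π.P (fun y => (ratio s (mobius s p y))⁻¹) π.ξ⟫_ℝ -
          ⟪x, π.P (const K (ratio s p)⁻¹) (π.Z s π.ξ)⟫_ℝ := by
    rw [← inner_P_left, defect, map_sub, inner_sub_right, ← P_mul_apply,
      π.P_congr (inv_ratio_mobius_eventuallyEq hp hps), inv_ratio_eq hp hps, Z_apply,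
      ← P_mul_apply, ← P_mul_apply]
    congr 4
    exact mul_right_comm _ _ _
  have eq_zero := π.mean_inner_defect_eq_zero hs hμ (π.P W⁻¹ x)
  simp only [← (π.Z s).adjoint_inner_left, inner_ratioAverage]
  rw [← sub_eq_zero, ← eq_zero, ← Mean.apply_sub]
  refine hμ.isDiffuse.apply_congr ?_
  filter_upwards [eventually_cofinite_ne 0, eventually_sq_add_ne_zero s] with p hp hps
  rw [moved p hp hps, P_Z, (π.Z s).adjoint_inner_left]

end RatioAverage

end CocycleRep

theorem inner_apply_eq_of_contraction {H : Type*} [NormedAddCommGroup H] [InnerProductSpace ℝ H]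
    [CompleteSpace H] {L : H →L[ℝ] H} (hL : ‖L‖ ≤ 1) {x : H} (hx : L x = x) (v : H) :
    ⟪x, L v⟫_ℝ = ⟪x, v⟫_ℝ := by
  rw [← ContinuousLinearMap.adjoint_inner_left]
  congr 1
  refine eq_of_norm_le_re_inner_eq_norm_sq (𝕜 := ℝ) ?_ ?_
  · have hL' : ‖L.adjoint‖ ≤ 1 := (LinearIsometryEquiv.norm_map _ L).trans_le hL
    simpa using L.adjoint.le_of_opNorm_le hL' x
  · rw [ContinuousLinearMap.adjoint_inner_left, hx, inner_self_eq_norm_sq]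

namespace CocycleRep

variable {K H : Type*} [Field K] [Infinite K] [NeZero (2 : K)] [NormedAddCommGroup H]
  [InnerProductSpace ℝ H] [CompleteSpace H] (π : CocycleRep K H) {s : K} (hs : s ≠ 0) {μ : Mean K}

section Stationary

variable {ν : Mean K}

include hs in
theorem inner_P_ratioAverage_step (hμ : μ.IsAffineInvariant) (u : Kˣ) :
    ⟪π.P (const K u) π.ξ, π.ratioAverage s (π.m.mobiusStep s μ)⟫_ℝ =
      ⟪π.P (const K u) π.ξ, π.Z s (π.ratioAverage s μ)⟫_ℝ := by
  rw [← π.inner_P_inv_ratio_mobius hs hμ, inner_ratioAverage, Mean.mobiusStep_apply]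
  simp only [π.inner_P (const K u) fun y => (ratio s (mobius s _ y))⁻¹, const_apply]

include hs in
theorem inner_ratioAverage_P_ratioAverage_step (hμ : μ.IsAffineInvariant) (u : Kˣ) :
    ⟪π.ratioAverage s ν, π.P (const K u) (π.ratioAverage s (π.m.mobiusStep s μ))⟫_ℝ =
      ⟪π.ratioAverage s ν, π.P (const K u) (π.Z s (π.ratioAverage s μ))⟫_ℝ := by
  simp only [ratioAverage_inner]
  refine congrArg ν (funext fun t => ?_)
  simp only [inner_P_left, ← P_mul_apply]
  exact π.inner_P_ratioAverage_step hs hμ (u⁻¹ * (ratio s t)⁻¹)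

variable (hν : ν.IsAffineInvariant) (hstat : ∀ f : K → ℝ, IsBdd f → π.m.mobiusStep s ν f = ν f)
include hs hν hstat

theorem Z_ratioAverage : π.Z s (π.ratioAverage s ν) = π.ratioAverage s ν := by
  have step_eq : π.ratioAverage s (π.m.mobiusStep s ν) = π.ratioAverage s ν := by
    refine ext_inner_left ℝ fun x => ?_
    rw [inner_ratioAverage, inner_ratioAverage, hstat]
    exact (IsBdd.const x).inner (π.isBdd_P _ _)
  have key := π.inner_ratioAverage_P_ratioAverage_step (ν := ν) hs hν 1
  rw [P_const_one, P_const_one, step_eq, real_inner_self_eq_norm_sq] at key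
  exact eq_of_norm_le_re_inner_eq_norm_sq (𝕜 := ℝ) (π.norm_Z_apply_le s _)
    ((real_inner_comm _ _).trans key.symm)

theorem inner_ratioAverage_step_eq (hμ : μ.IsAffineInvariant) (u : Kˣ) :
    ⟪π.ratioAverage s ν, π.P (const K u) (π.ratioAverage s (π.m.mobiusStep s μ))⟫_ℝ =
      ⟪π.ratioAverage s ν, π.P (const K u) (π.ratioAverage s μ)⟫_ℝ := by
  rw [π.inner_ratioAverage_P_ratioAverage_step hs hμ, P_Z,
    inner_apply_eq_of_contraction (π.norm_Z_le s) (π.Z_ratioAverage hs hν hstat)]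

theorem inner_ratioAverage_P_inv_ratio (u : Kˣ) :
    ⟪π.ratioAverage s ν, π.P (const K u * (ratio s)⁻¹) π.ξ⟫_ℝ =
      ⟪π.T (π.T (π.ratioAverage s ν)), π.P (const K (u * toUnit 2) * linFactor 0) π.ξ⟫_ℝ := by
  have hw : const K u * (ratio s)⁻¹ =ᶠ[cofinite]
      (normForm s)⁻¹ * (const K (u * toUnit 2) * linFactor 0) := by
    filter_upwards [inv_ratio_eventuallyEq s] with y hy
    simp only [Pi.mul_apply, hy, const_apply]
    ext
    push_cast
    ring
  nth_rw 1 [← π.Z_ratioAverage hs hν hstat]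
  rw [π.P_congr hw, P_mul_apply, Z_apply, LinearIsometry.inner_map_map]

theorem inner_ratioAverage_P_inv_ratio_eq (u : Kˣ) :
    ⟪π.ratioAverage s ν, π.P (const K u * (ratio s)⁻¹) π.ξ⟫_ℝ =
      ⟪π.ratioAverage s ν, π.P (const K 1 * (ratio s)⁻¹) π.ξ⟫_ℝ := by
  have homogeneous : π.IsHomogeneous 0 (π.ratioAverage s ν) := fun a b => by
    rw [U_ratioAverage, pow_zero, P_const_one]
  rw [inner_ratioAverage_P_inv_ratio π hs hν hstat, inner_ratioAverage_P_inv_ratio π hs hν hstat]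
  have hw : (fun y => (const K (u * toUnit 2) * linFactor 0 : K → Kˣ) (u * y + 0)) =ᶠ[cofinite]
      const K (u ^ 2) * (const K (1 * toUnit 2) * linFactor 0) := by
    filter_upwards [linFactor_affine u 0 0] with y hy
    rw [mul_zero, zero_add] at hy
    simp only [Pi.mul_apply, hy, const_apply]
    ext
    push_cast
    ring
  rw [← (π.U u 0).inner_map_map, homogeneous.T.T, U_P, U_ξ, π.P_congr hw, P_mul_apply,
    LinearIsometry.inner_map_map]

theorem P_ratioAverage
    (havg : ∀ f : K → ℝ,
      (∀ μ : Mean K, μ.IsAffineInvariant → π.m.mobiusStep s μ f = μ f) → ν f = π.m f)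
    (u : Kˣ) : π.P (const K u) (π.ratioAverage s ν) = π.ratioAverage s ν := by
  set k := π.ratioAverage s ν
  have inner_P_k (u : Kˣ) : ⟪k, π.P (const K u) k⟫_ℝ =
      ⟪k, π.P (const K u) (π.ratioAverage s π.m)⟫_ℝ := by
    rw [inner_P_left, inner_P_left, inner_ratioAverage, inner_ratioAverage]
    refine havg _ fun μ hμ => ?_
    have step_eq := π.inner_ratioAverage_step_eq hs hν hstat hμ u
    rwa [inner_P_left, inner_P_left, inner_ratioAverage, inner_ratioAverage] at step_eq
  have fibrewise (u : Kˣ) : ⟪k, π.P (const K u) (π.ratioAverage s π.m)⟫_ℝ =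
      ⟪k, π.P (const K u * (ratio s)⁻¹) π.ξ⟫_ℝ := by
    simp only [k, ratioAverage_inner]
    refine congrArg ν (funext fun t => ?_)
    rw [π.inner_P, inner_P_left, inner_ratioAverage]
    refine congrArg π.m (funext fun y => ?_)
    rw [← inner_P_left, ← P_mul_apply]
    rfl
  refine eq_of_norm_le_re_inner_eq_norm_sq (𝕜 := ℝ) ((π.P _).norm_map k).le ?_
  have key : ⟪k, π.P (const K u) k⟫_ℝ = ⟪k, π.P (const K 1) k⟫_ℝ := by
    simp only [inner_P_k, fibrewise, π.inner_ratioAverage_P_inv_ratio_eq hs hν hstat u, k]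
  rw [P_const_one] at key
  exact (real_inner_comm _ _).trans (key.trans (real_inner_self_eq_norm_sq _))

end Stationary

include hs in
theorem frequently_inner_P_ratio_ne_zero {e : H} {a : ℝ} (ha : a ≠ 0)
    (he : ∀ u, ⟪π.P (const K u) π.ξ, e⟫_ℝ = a) :
    ∃ᶠ t in cofinite, ⟪π.ξ, π.P (const K (ratio s t)) π.ξ⟫_ℝ ≠ 0 := by
  obtain ⟨ν, hν, hstat, havg⟩ := Mean.exists_stationary s π.isAffineInvariant
  set k := π.ratioAverage s ν with k_def
  have inner_k_e : ⟪k, e⟫_ℝ = a := by simp only [k, ratioAverage_inner, he, Mean.apply_const]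
  intro orthogonal
  have inner_k_ξ : ⟪k, π.ξ⟫_ℝ = 0 := by
    rw [ratioAverage_inner, ← ν.apply_const 0]
    refine hν.isDiffuse.apply_congr ?_
    filter_upwards [orthogonal] with t ht
    rw [← not_ne_iff.1 ht, inner_P_left]
    rfl
  have inner_k_P_ξ (u : Kˣ) : ⟪k, π.P (const K u) π.ξ⟫_ℝ = 0 := by
    rw [← inner_k_ξ, ← (π.P (const K u)).inner_map_map k π.ξ, k_def,
      π.P_ratioAverage hs hν hstat havg]
  have k_eq_zero : k = 0 := by
    rw [← inner_self_eq_zero (𝕜 := ℝ)]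
    nth_rw 2 [k_def]
    simp only [inner_ratioAverage, inner_k_P_ξ, Mean.apply_const]
  rw [k_eq_zero, inner_zero_left] at inner_k_e
  exact ha inner_k_e.symm

end CocycleRep

section MeanSpace

universe u

variable {X : Type u}

/-- The bounded functions on `X`. -/
def boundedFunctions (X : Type u) : Submodule ℝ (X → ℝ) where
  carrier := {f | IsBdd f}
  add_mem' hf hg := hf.add hg
  zero_mem' := IsBdd.const 0
  smul_mem' a _ hf := hf.smul a

namespace Mean

/-- The bounded functions on `X`, as a copy carrying the semi-inner product `⟪f, g⟫ = μ (f * g)`. -/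
def PreL2 (_μ : Mean X) : Type u := boundedFunctions X

variable (μ : Mean X)

noncomputable instance : AddCommGroup μ.PreL2 := inferInstanceAs (AddCommGroup (boundedFunctions X))

noncomputable instance : Module ℝ μ.PreL2 := inferInstanceAs (Module ℝ (boundedFunctions X))

/-- The semi-inner product `⟪f, g⟫ = μ (f * g)`. -/
@[reducible]
noncomputable def preL2Core : PreInnerProductSpace.Core ℝ μ.PreL2 where
  inner f g := μ fun x => f.1 x * g.1 x
  conj_inner_symm f g := by simp [mul_comm]
  re_inner_nonneg f := nonneg (f.2.mul f.2) fun x => mul_self_nonneg (f.1 x)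
  add_left f g h := by
    rw [← apply_add]
    exact congrArg μ (funext fun x => add_mul (f.1 x) (g.1 x) (h.1 x))
  smul_left f g a := by
    rw [← apply_const_mul]
    exact congrArg μ (funext fun x => mul_assoc a (f.1 x) (g.1 x))

noncomputable instance : SeminormedAddCommGroup μ.PreL2 :=
  @InnerProductSpace.Core.toSeminormedAddCommGroup ℝ μ.PreL2 _ _ _ μ.preL2Core

noncomputable instance : InnerProductSpace ℝ μ.PreL2 := InnerProductSpace.ofCore μ.preL2Core

/-- The Hilbert space of a mean. -/
abbrev L2 : Type u := UniformSpace.Completion μ.PreL2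

variable {μ}

/-- The class of a bounded function in `L2`. -/
noncomputable def toL2 {f : X → ℝ} (hf : IsBdd f) : μ.L2 :=
  UniformSpace.Completion.toComplL (𝕜 := ℝ) (E := μ.PreL2) ⟨f, hf⟩

variable {f g : X → ℝ} (hf : IsBdd f) (hg : IsBdd g)

theorem inner_toL2 : ⟪(toL2 hf : μ.L2), toL2 hg⟫_ℝ = μ fun x => f x * g x :=
  UniformSpace.Completion.inner_coe (𝕜 := ℝ) (E := μ.PreL2) ⟨f, hf⟩ ⟨g, hg⟩

theorem toL2_eq_toL2 (h : (μ fun x => (f x - g x) ^ 2) = 0) : (toL2 hf : μ.L2) = toL2 hg := by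
  rw [← sub_eq_zero, ← inner_self_eq_zero (𝕜 := ℝ), ← h]
  simp only [inner_sub_left, inner_sub_right, inner_toL2, ← apply_sub]
  congr! 2 with x
  ring

theorem toL2_induction {p : μ.L2 → Prop} (hp : IsClosed {v | p v})
    (h : ∀ (f : X → ℝ) (hf : IsBdd f), p (toL2 hf)) (v : μ.L2) : p v :=
  UniformSpace.Completion.induction_on v hp fun f => h f.1 f.2

theorem linearIsometry_ext {E : Type*} [NormedAddCommGroup E] [NormedSpace ℝ E]
    {A B : μ.L2 →ₗᵢ[ℝ] E} (h : ∀ (f : X → ℝ) (hf : IsBdd f), A (toL2 hf) = B (toL2 hf)) : A = B :=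
  LinearIsometry.ext (toL2_induction (isClosed_eq A.continuous B.continuous) h)

variable (μ) in
/-- A map preserves a mean if substituting it does not change the mean of bounded functions. -/
def Preserves (φ : X → X) : Prop := ∀ f : X → ℝ, IsBdd f → μ (fun x => f (φ x)) = μ f

namespace Preserves

variable {φ : X → X} (hφ : μ.Preserves φ)

/-- The substitution `f ↦ f ∘ φ` on bounded functions. -/
def preKoopman : μ.PreL2 →ₗᵢ[ℝ] μ.PreL2 where
  toFun f := ⟨fun x => f.1 (φ x), f.2.comp φ⟩
  map_add' _ _ := rfl
  map_smul' _ _ := rfl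
  norm_map' f := by
    rw [norm_eq_sqrt_real_inner, norm_eq_sqrt_real_inner f]
    exact congrArg _ (hφ _ (f.2.mul f.2))

theorem completion_preKoopman_toL2 :
    hφ.preKoopman.toContinuousLinearMap.completion (toL2 hf) = toL2 (hf.comp φ) :=
  ContinuousLinearMap.completion_apply_coe _ _

/-- The Koopman isometry `f ↦ f ∘ φ` of a mean-preserving map. -/
noncomputable def koopman : μ.L2 →ₗᵢ[ℝ] μ.L2 where
  toLinearMap := hφ.preKoopman.toContinuousLinearMap.completion.toLinearMap
  norm_map' := toL2_induction (isClosed_eq (ContinuousLinearMap.continuous _).norm continuous_norm)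
    fun f hf => by
      rw [norm_eq_sqrt_real_inner, norm_eq_sqrt_real_inner (toL2 hf), inner_toL2 hf hf,
        ← hφ _ (hf.mul hf), ← inner_toL2 (hf.comp φ) (hf.comp φ)]
      congr! <;> exact hφ.completion_preKoopman_toL2 hf

theorem koopman_toL2 : hφ.koopman (toL2 hf) = toL2 (hf.comp φ) := hφ.completion_preKoopman_toL2 hf

end Preserves

end Mean

end MeanSpace

section Model

variable {K : Type*} [Field K]

/-- Multiplication of the fibre of `K × Kˣ` over `y` by `w y`. -/
def fibreMul (w : K → Kˣ) (p : K × Kˣ) : K × Kˣ := (p.1, w p.1 * p.2)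

/-- The affine substitution `y ↦ a * y + b` on the base of `K × Kˣ`. -/
def baseAffine (a : Kˣ) (b : K) (p : K × Kˣ) : K × Kˣ := (a * p.1 + b, p.2)

variable {m : Mean K} {n : Mean Kˣ}

theorem preserves_fibreMul (m : Mean K) (hn : ∀ a : Kˣ, n.Preserves (a * ·)) (w : K → Kˣ) :
    (m.prod n).Preserves (fibreMul w) := fun f hf =>
  congrArg m (funext fun y => hn (w y) (fun g => f (y, g)) (hf.comp _))

theorem preserves_baseAffine (hm : m.IsAffineInvariant) (n : Mean Kˣ) (a : Kˣ) (b : K) :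
    (m.prod n).Preserves (baseAffine a b) := fun f hf =>
  hm a b (fun y => n fun g => f (y, g)) (IsBdd.mean_apply hf fun _ => n)

/-- The representation on the Hilbert space of `m.prod n`, with a function of the fibre coordinate
as the fixed vector. -/
noncomputable def CocycleRep.ofMeans [Infinite K] (hm : m.IsAffineInvariant)
    (hn : ∀ a : Kˣ, n.Preserves (a * ·)) {φ : Kˣ → ℝ} (hφ : IsBdd φ) :
    CocycleRep K (m.prod n).L2 where
  m := m
  P :=
    { toFun := fun w => (preserves_fibreMul m hn w).koopman
      map_one' := Mean.linearIsometry_ext fun f hf => by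
        simp only [Mean.Preserves.koopman_toL2, fibreMul, Pi.one_apply, one_mul]
        rfl
      map_mul' := fun w w' => Mean.linearIsometry_ext fun f hf => by
        simp only [LinearIsometry.coe_mul, comp_apply, Mean.Preserves.koopman_toL2, fibreMul,
          Pi.mul_apply, mul_comm (w _), mul_assoc] }
  U a b := (preserves_baseAffine hm n a b).koopman
  ξ := Mean.toL2 (hφ.comp Prod.snd)
  isAffineInvariant := hm
  P_congr {w w'} h := Mean.linearIsometry_ext fun f hf => by
    simp only [MonoidHom.coe_mk, OneHom.coe_mk, Mean.Preserves.koopman_toL2]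
    refine Mean.toL2_eq_toL2 _ _ ((hm.isDiffuse.apply_congr ?_).trans (m.apply_const 0))
    filter_upwards [h] with y hy
    exact (congrArg n (funext fun g => by simp [fibreMul, hy])).trans (n.apply_const 0)
  U_P a b w := Mean.toL2_induction (isClosed_eq (by fun_prop) (by fun_prop)) fun f hf => by
    simp only [MonoidHom.coe_mk, OneHom.coe_mk, Mean.Preserves.koopman_toL2]
    rfl
  U_ξ a b := Mean.Preserves.koopman_toL2 _ _
  inner_P w w' := by
    simp only [MonoidHom.coe_mk, OneHom.coe_mk, Mean.Preserves.koopman_toL2, Mean.inner_toL2,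
      Mean.prod_apply, fibreMul, const_apply, Mean.apply_const]

theorem CocycleRep.inner_ofMeans_P_const_ξ [Infinite K] (hm : m.IsAffineInvariant)
    (hn : ∀ a : Kˣ, n.Preserves (a * ·)) {φ ψ : Kˣ → ℝ} (hφ : IsBdd φ) (hψ : IsBdd ψ) (u : Kˣ) :
    ⟪(ofMeans hm hn hφ).P (const K u) (ofMeans hm hn hφ).ξ, Mean.toL2 (hψ.comp Prod.snd)⟫_ℝ =
      n fun g => φ (u * g) * ψ g := by
  simp only [ofMeans, MonoidHom.coe_mk, OneHom.coe_mk, Mean.Preserves.koopman_toL2, Mean.inner_toL2,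
      Mean.prod_apply, fibreMul, const_apply, Mean.apply_const]

theorem Mean.exists_apply_indicator_fiber_ne_zero {X κ : Type*} [Finite κ] (μ : Mean X)
    (c : X → κ) : ∃ i, μ (Set.indicator (c ⁻¹' {i}) fun _ => 1) ≠ 0 := by
  classical
  have := Fintype.ofFinite κ
  by_contra! h
  have total : (fun _ : X => (1 : ℝ)) = fun x => ∑ i, Set.indicator (c ⁻¹' {i}) (fun _ => 1) x := by
    ext x
    simp [Set.indicator_apply]
  refine one_ne_zero (α := ℝ) ?_
  rw [← μ.apply_const 1, total, apply_sum]
  exact Finset.sum_eq_zero fun i _ => h i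

theorem frequently_exists_ratio_mul_same_color [Infinite K] [NeZero (2 : K)] {s : K} (hs : s ≠ 0)
    {κ : Type*} [Finite κ] (c : Kˣ → κ) :
    ∃ᶠ t in cofinite, ∃ g : Kˣ, c (ratio s t * g) = c g := by
  obtain ⟨m, hm⟩ := Mean.exists_isAffineInvariant K
  obtain ⟨n, hn⟩ := Mean.exists_invariant Kˣ Kˣ
  obtain ⟨i, hi⟩ := n.exists_apply_indicator_fiber_ne_zero c
  have bdd : IsBdd ((c ⁻¹' {i}).indicator fun _ => (1 : ℝ)) :=
    ⟨1, fun g => (norm_indicator_le_norm_self _ g).trans norm_one.le⟩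
  let π := CocycleRep.ofMeans hm hn bdd
  have inner_ξ {ψ : Kˣ → ℝ} (hψ : IsBdd ψ) (u : Kˣ) :
      ⟪π.P (const K u) π.ξ, Mean.toL2 (hψ.comp Prod.snd)⟫_ℝ =
        n fun g => (c ⁻¹' {i}).indicator (fun _ => 1) (u * g) * ψ g :=
    CocycleRep.inner_ofMeans_P_const_ξ hm hn bdd hψ u
  have mass (u : Kˣ) :
      ⟪π.P (const K u) π.ξ, Mean.toL2 ((IsBdd.const 1).comp Prod.snd)⟫_ℝ =
        n ((c ⁻¹' {i}).indicator fun _ => 1) := by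
    simp only [inner_ξ (IsBdd.const 1) u, mul_one]
    exact hn u _ bdd
  refine (π.frequently_inner_P_ratio_ne_zero hs hi mass).mono fun t ht => ?_
  contrapose! ht
  rw [real_inner_comm, ← n.apply_const 0]
  refine (inner_ξ bdd _).trans (congrArg n (funext fun g => ?_))
  by_cases hg : c g = i
  · simp [← hg, ht g]
  · simp [hg]

theorem exists_sq_eq_mul_sq_add_sq [Infinite K] [NeZero (2 : K)] {s : K} (hs : s ≠ 0) {κ : Type*}
    [Finite κ] (c : Kˣ → κ) :
    ∃ x y z : Kˣ, c x = c y ∧ (x : K) ^ 2 ≠ y ^ 2 ∧ (x : K) ^ 2 = s * y ^ 2 + z ^ 2 := by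
  have generic : ∀ᶠ t : K in cofinite, t ≠ 0 ∧ t ^ 2 + s ≠ 0 ∧ t ^ 2 - s ≠ 0 ∧
      t ^ 2 + 2 * t + s ≠ 0 ∧ t ^ 2 - 2 * t + s ≠ 0 := by
    filter_upwards [eventually_cofinite_ne 0, eventually_sq_add_ne_zero s,
      eventually_sq_add_ne_zero (-s), eventually_quadratic_ne_zero 2 s,
      eventually_quadratic_ne_zero (-2) s] with t h₁ h₂ h₃ h₄ h₅
    simp_all [sub_eq_add_neg]
  obtain ⟨t, ⟨g, hg⟩, ht, htx, htz, ht₁, ht₂⟩ :=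
    ((frequently_exists_ratio_mul_same_color hs c).and_eventually generic).exists
  have two_ne : (2 : K) ≠ 0 := two_ne_zero
  have hx : ((ratio s t * g : Kˣ) : K) = (t ^ 2 + s) / (2 * t) * g := by
    rw [Units.val_mul, ratio, val_toUnit (div_ne_zero htx (mul_ne_zero two_ne ht))]
  refine ⟨ratio s t * g, g, Units.mk0 ((t ^ 2 - s) / (2 * t) * g)
    (mul_ne_zero (div_ne_zero htz (mul_ne_zero two_ne ht)) g.ne_zero), hg, fun h => ?_, ?_⟩
  · rw [hx, mul_pow, mul_eq_right₀ (pow_ne_zero 2 g.ne_zero), div_pow,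
      div_eq_one_iff_eq (pow_ne_zero 2 (mul_ne_zero two_ne ht)), sq_eq_sq_iff_eq_or_eq_neg] at h
    rcases h with h | h
    · exact ht₂ (by linear_combination h)
    · exact ht₁ (by linear_combination h)
  · rw [hx, Units.val_mk0]
    field_simp
    ring

end Model

theorem exists_rat_coloring {κ : Type*} [Finite κ] (C : ℕ → κ) :
    ∃ c : ℚ → κ, ∀ x y, c x = c y → ∀ M : ℕ, 0 < M →
      ∃ N : ℕ, 0 < N ∧ M ∣ N ∧ C (N * x).num.natAbs = C (N * y).num.natAbs := by
  have limit_color (q : ℚ) :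
      ∃ i, ∀ᶠ N : ℕ in hyperfilter ℕ, C ((N.factorial : ℚ) * q).num.natAbs = i := by
    obtain ⟨i, hi⟩ := Ultrafilter.eq_pure_of_finite
      ((hyperfilter ℕ).map fun N => C ((N.factorial : ℚ) * q).num.natAbs)
    exact ⟨i, Ultrafilter.mem_map.1 (hi ▸ Ultrafilter.mem_pure.2 (Set.mem_singleton i))⟩
  choose c hc using limit_color
  refine ⟨c, fun x y hxy M hM => ?_⟩
  have large : ∀ᶠ N in hyperfilter ℕ, M ≤ N :=
    Nat.hyperfilter_le_atTop (eventually_ge_atTop M)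
  obtain ⟨N, hx, hy, hN⟩ := ((hc x).and ((hc y).and large)).exists
  exact ⟨N.factorial, N.factorial_pos, Nat.dvd_factorial hM hN, by rw [hx, hy, hxy]⟩

theorem natAbs_num_mul_of_den_dvd {q : ℚ} {N : ℕ} (h : q.den ∣ N) :
    ((N * q).num.natAbs : ℚ) = N * |q| := by
  have den_eq : (N * q).den = 1 := by
    obtain ⟨k, rfl⟩ := h
    have : ((q.den * k : ℕ) : ℚ) * q = ((k * q.num : ℤ) : ℚ) := by
      push_cast
      rw [mul_comm (q.den : ℚ), mul_assoc, mul_comm _ q, Rat.mul_den_eq_num]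
    rw [this, Rat.den_intCast]
  rw [← Int.cast_natCast, Int.natCast_natAbs, Int.cast_abs, Rat.coe_int_num_of_den_eq_one den_eq,
    abs_mul, Nat.abs_cast]

theorem squares_coloring_pythagorean_general {κ : Type*} [Finite κ] (C : ℕ → κ) {s : ℚ}
    (hs : s ≠ 0) :
    ∃ x y z : ℕ, 0 < x ∧ 0 < y ∧ 0 < z ∧ x ^ 2 ≠ y ^ 2 ∧ C (x ^ 2) = C (y ^ 2) ∧
      (x : ℚ) ^ 2 = s * y ^ 2 + z ^ 2 := by
  obtain ⟨c, hc⟩ := exists_rat_coloring fun n => C (n ^ 2)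
  obtain ⟨x, y, z, hxy, hne, heq⟩ := exists_sq_eq_mul_sq_add_sq hs fun u : ℚˣ => c u
  obtain ⟨N, hN, hdvd, hC⟩ := hc x y hxy ((x : ℚ).den * (y : ℚ).den * (z : ℚ).den)
    (by positivity)
  have clear {u : ℚˣ} (hu : (u : ℚ).den ∣ N) : ((N * (u : ℚ)).num.natAbs : ℚ) = N * |(u : ℚ)| :=
    natAbs_num_mul_of_den_dvd hu
  have hx := clear ((Dvd.intro _ (mul_assoc _ _ _).symm).trans hdvd : (x : ℚ).den ∣ N)
  have hy := clear (((dvd_mul_left _ _).mul_right _).trans hdvd : (y : ℚ).den ∣ N)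
  have hz := clear ((dvd_mul_left _ _).trans hdvd : (z : ℚ).den ∣ N)
  have pos (u : ℚˣ) : 0 < (N * (u : ℚ)).num.natAbs :=
    Int.natAbs_pos.2 (Rat.num_ne_zero.2 (mul_ne_zero (by positivity) u.ne_zero))
  refine ⟨_, _, _, pos x, pos y, pos z, fun h => hne ?_, hC, ?_⟩
  · have h' : ((N * (x : ℚ)).num.natAbs : ℚ) ^ 2 = ((N * (y : ℚ)).num.natAbs : ℚ) ^ 2 := mod_cast h
    rw [hx, hy, mul_pow, mul_pow, sq_abs, sq_abs] at h'
    exact mul_left_cancel₀ (by positivity) h'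
  · rw [hx, hy, hz, mul_pow, mul_pow, mul_pow, sq_abs, sq_abs, sq_abs, heq]
    ring

/-- For every finite coloring of the set of perfect squares:
(1) there are distinct squares `x, y` of the same color whose sum is a perfect square;
(2) there are distinct squares `x, y` of the same color whose difference is a perfect
square (in particular `x − y > 0`, phrased as `x = y + z²` with `z` positive). -/
theorem squares_coloring_pythagorean
    (r : ℕ) (C : ℕ → Fin r) :
    (∃ x y : ℕ, (∃ k : ℕ, 0 < k ∧ x = k ^ 2) ∧ (∃ k : ℕ, 0 < k ∧ y = k ^ 2) ∧
      x ≠ y ∧ C x = C y ∧ ∃ z : ℕ, 0 < z ∧ x + y = z ^ 2) ∧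
    (∃ x y : ℕ, (∃ k : ℕ, 0 < k ∧ x = k ^ 2) ∧ (∃ k : ℕ, 0 < k ∧ y = k ^ 2) ∧
      x ≠ y ∧ C x = C y ∧ ∃ z : ℕ, 0 < z ∧ x = y + z ^ 2) := by
  obtain ⟨x, y, z, hx, hy, hz, hxy, hC, h⟩ :=
    squares_coloring_pythagorean_general C (neg_ne_zero.2 (one_ne_zero (α := ℚ)))
  obtain ⟨x', y', z', hx', hy', hz', hxy', hC', h'⟩ :=
    squares_coloring_pythagorean_general C (one_ne_zero (α := ℚ))
  exact ⟨⟨x ^ 2, y ^ 2, ⟨x, hx, rfl⟩, ⟨y, hy, rfl⟩, hxy, hC, z, hz, by qify; linarith⟩,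
    ⟨x' ^ 2, y' ^ 2, ⟨x', hx', rfl⟩, ⟨y', hy', rfl⟩, hxy', hC', z', hz', by qify; linarith⟩⟩
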